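/- Let δ21 = X² + 2X + 2, δ41 = X⁴ + 2X³ + 2X² + 4X + 4, δ81 = X⁸ + 4X⁷ + 6X⁶ + 4X⁵ + 2X⁴ + 8X³ + 24X² + 32X + 16, and δ82 = X⁸ + 2X⁶ + 4X⁵ + 2X⁴ + 8X³ + 8X² + 16. Then for every odd n ≥ 4, F_2(n,1,0,0,0) = 2^{n−4} − (1/16)·E, where E = 4ρ_n(δ21) + ρ_n(δ41) + ρ_n(δ81) + ρ_n(δ82) if n ≡ 1 (mod 8); E = 2ρ_n(δ21) − ρ_n(δ41) − ρ_n(δ81) + ρ_n(δ82) if n ≡ 3 (mod 8); E = ρ_n(δ41) − ρ_n(δ81) − ρ_n(δ82) if n ≡ 5 (mod 8); and E = −2ρ_n(δ21) − ρ_n(δ41) + ρ_n(δ81) − ρ_n(δ82) if n ≡ 7 (mod 8). The equality is between complex numbers, the count being viewed in ℂ. -/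

import Mathlib

open Polynomial

/-- For a finite field `K` with `2^n` elements, the `k`-th trace function
`T_k(a) = Σ_S ∏_{i ∈ S} a^(2^i)`, the sum over all `k`-element subsets `S` of `{0,…,n-1}`. -/
noncomputable def traceFn (q n k : ℕ) {K : Type*} [CommRing K] (a : K) : K :=
  ∑ S ∈ Finset.powersetCard k (Finset.range n), ∏ i ∈ S, a ^ (q ^ i)

/-- `ρ_n(γ)`: the sum of the `n`-th powers of the complex roots of `γ ∈ ℤ[X]`,
counted with multiplicity. -/
noncomputable def rho (n : ℕ) (γ : Polynomial ℤ) : ℂ :=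
  ((γ.map (Int.castRingHom ℂ)).roots.map (· ^ n)).sum

/-- `F_2(n,t₁,t₂,t₃,t₄)`: the number of `a` in the field `K` (of `2^n` elements)
with `T_k(a) = t_k` for `k = 1,2,3,4`. -/
noncomputable def cnt4 (n : ℕ) (K : Type) [Field K] [Fintype K] (t1 t2 t3 t4 : K) : ℕ :=
  Nat.card {a : K // traceFn 2 n 1 a = t1 ∧ traceFn 2 n 2 a = t2 ∧
    traceFn 2 n 3 a = t3 ∧ traceFn 2 n 4 a = t4}

noncomputable def d21 : Polynomial ℤ := X ^ 2 + 2 * X + 2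
noncomputable def d41 : Polynomial ℤ := X ^ 4 + 2 * X ^ 3 + 2 * X ^ 2 + 4 * X + 4
noncomputable def d81 : Polynomial ℤ :=
  X ^ 8 + 4 * X ^ 7 + 6 * X ^ 6 + 4 * X ^ 5 + 2 * X ^ 4 + 8 * X ^ 3 + 24 * X ^ 2 + 32 * X + 16
noncomputable def d82 : Polynomial ℤ :=
  X ^ 8 + 2 * X ^ 6 + 4 * X ^ 5 + 2 * X ^ 4 + 8 * X ^ 3 + 8 * X ^ 2 + 16

/-!
Let `c_a` be the characteristic polynomial over `𝔽₂` of multiplication by `a ∈ K`. The reverse of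
`c_a` is `1 + T_1(a) X + T_2(a) X ^ 2 + ⋯`, so `F_2(n,1,0,0,0)` counts the `a` for which it is
congruent to `1 + X` modulo `X ^ 5`. The group `(1 + X 𝔽₂[X]) / (X ^ 5)` is `ℤ/8 × ℤ/2`, generated
by `1 + X` and `1 + X ^ 3`, and orthogonality of its sixteen characters reduces the count to the
sums `∑_a ψ(c_a)` over `K`.

Every monic `g` of degree `n` is `c_a` for exactly `Λ(g)` elements `a`, where `Λ` is the von
Mangoldt function of `𝔽₂[X]`. Hence `∑_a ψ(c_a)` is a coefficient of the logarithmic derivative of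
the `L`-series of `ψ`, and for nontrivial `ψ` this series is a polynomial of degree at most `3`,
so that the sum is minus the sum of the `n`-th powers of its reciprocal roots.

The character sums come weighted by `ξ⁻¹`, where `ξ = ψ(1 + X)`. According to the residue of `n`
modulo `8`, this weight is, up to sign, the `n`-th power of a suitable root of unity in `ℤ[ξ]`,
and is absorbed by scaling the roots. Summing over the conjugates of `ξ` then amounts to taking
the norm of the scaled polynomial from `ℤ[ξ][X]` to `ℤ[X]`, and these norms are products of the
`δ`'s, of even polynomials and of powers of `X`; the last two do not contribute for odd `n`.
-/

section MonicPolynomials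

variable {R : Type*} [Semiring R]

theorem X_mul_add_C_injective :
    Function.Injective fun p : R[X] × R ↦ X * p.1 + C p.2 := by
  rintro ⟨f, a⟩ ⟨g, b⟩ h
  have hab : a = b := by simpa using congrArg (coeff · 0) h
  have hfg : f = g := by
    ext k
    simpa using congrArg (coeff · (k + 1)) h
  rw [hab, hfg]

variable [Fintype R]

variable (R) in
/-- The monic polynomials of degree `d` over a finite semiring, as a `Finset`. The recursive
encoding `f = X * g + C b` turns sums over degree `d + 1` into sums over degree `d`. -/
noncomputable def monicOfDegree : ℕ → Finset R[X]
  | 0 => {1}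
  | d + 1 => (monicOfDegree d ×ˢ Finset.univ).map
      ⟨fun p ↦ X * p.1 + C p.2, X_mul_add_C_injective⟩

theorem sum_monicOfDegree_succ {M : Type*} [AddCommMonoid M] (d : ℕ) (φ : R[X] → M) :
    ∑ f ∈ monicOfDegree R (d + 1), φ f =
      ∑ g ∈ monicOfDegree R d, ∑ b : R, φ (X * g + C b) := by
  rw [monicOfDegree, Finset.sum_map, Finset.sum_product]
  rfl

theorem mem_monicOfDegree [Nontrivial R] {d : ℕ} {f : R[X]} :
    f ∈ monicOfDegree R d ↔ f.Monic ∧ f.natDegree = d := by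
  induction d generalizing f with
  | zero =>
    rw [monicOfDegree, Finset.mem_singleton]
    refine ⟨?_, fun h ↦ h.1.natDegree_eq_zero.mp h.2⟩
    rintro rfl
    exact ⟨monic_one, natDegree_one⟩
  | succ d ih =>
    simp only [monicOfDegree, Finset.mem_map, Finset.mem_product, Finset.mem_univ, and_true,
      Function.Embedding.coeFn_mk, Prod.exists, ih]
    constructor
    · rintro ⟨g, b, ⟨hg, rfl⟩, rfl⟩
      have hXg : (X * g).natDegree = g.natDegree + 1 := natDegree_X_mul hg.ne_zero
      refine ⟨(monic_X.mul hg).add_of_left ?_, by rw [natDegree_add_C, hXg]⟩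
      exact degree_C_le.trans_lt (natDegree_pos_iff_degree_pos.mp (by lia))
    · rintro ⟨hf, hd⟩
      have hdiv : f.divX.natDegree = d := by rw [natDegree_divX_eq_natDegree_tsub_one, hd]; rfl
      refine ⟨f.divX, f.coeff 0, ⟨?_, hdiv⟩, X_mul_divX_add f⟩
      rw [Monic, leadingCoeff, hdiv, coeff_divX, ← hd, hf.coeff_natDegree]

end MonicPolynomials

section VonMangoldt

open UniqueFactorizationMonoid

variable {F : Type*} [Field F] [DecidableEq F]

open Classical in
/-- The von Mangoldt function of `F[X]`: `Λ(P ^ j) = deg P` for `P` irreducible and `j ≥ 1`, and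
`Λ(f) = 0` if `f` is not a prime power. -/
noncomputable def vonMangoldt (f : F[X]) : ℕ :=
  if IsPrimePow f then (radical f).natDegree else 0

theorem vonMangoldt_pow_of_irreducible {P : F[X]} (hP : Irreducible P) {j : ℕ} (hj : j ≠ 0) :
    vonMangoldt (P ^ j) = P.natDegree := by
  have hpow : IsPrimePow (P ^ j) := ⟨P, j, hP.prime, Nat.pos_of_ne_zero hj, rfl⟩
  rw [vonMangoldt, if_pos hpow, radical_pow_of_prime hP.prime hj]
  exact natDegree_eq_of_degree_eq degree_normalize

theorem exists_pow_eq_of_vonMangoldt_ne_zero {f : F[X]} (hf : f.Monic) (h : vonMangoldt f ≠ 0) :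
    ∃ P : F[X], P.Monic ∧ Irreducible P ∧ ∃ j ≠ 0, P ^ j = f := by
  obtain ⟨Q, j, hQ, hj, rfl⟩ : IsPrimePow f := by
    by_contra hpow
    exact h (if_neg hpow)
  refine ⟨normalize Q, monic_normalize hQ.ne_zero,
    (normalize_associated Q).symm.irreducible hQ.irreducible, j, hj.ne', ?_⟩
  exact eq_of_monic_of_associated ((monic_normalize hQ.ne_zero).pow j) hf
    ((normalize_associated Q).pow_pow)

theorem monic_and_irreducible_of_mem_normalizedFactors {f P : F[X]}
    (hP : P ∈ normalizedFactors f) : P.Monic ∧ Irreducible P := by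
  have hirr := irreducible_of_normalized_factor P hP
  exact ⟨normalize_normalized_factor P hP ▸ monic_normalize hirr.ne_zero, hirr⟩

theorem natDegree_eq_sum_count_normalizedFactors {f : F[X]} (hf : f.Monic) :
    f.natDegree =
      ∑ P ∈ primeFactors f, (normalizedFactors f).count P * P.natDegree := by
  have hprod : (normalizedFactors f).prod = f := by
    rw [prod_normalizedFactors_eq hf.ne_zero, hf.normalize_eq_self]
  conv_lhs => rw [← hprod]
  rw [natDegree_multiset_prod _ (zero_notMem_normalizedFactors f), Finset.sum_multiset_map_count,
    toFinset_normalizedFactors]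
  rfl

theorem pow_dvd_iff_le_count_normalizedFactors {f P : F[X]} (hf : f ≠ 0)
    (hP : P.Monic) (hirr : Irreducible P) {j : ℕ} :
    P ^ j ∣ f ↔ j ≤ (normalizedFactors f).count P := by
  rw [dvd_iff_normalizedFactors_le_normalizedFactors (pow_ne_zero _ hirr.ne_zero) hf,
    normalizedFactors_pow, normalizedFactors_irreducible hirr, hP.normalize_eq_self,
    Multiset.nsmul_singleton, ← Multiset.le_count_iff_replicate_le]

omit [DecidableEq F] in
theorem pow_eq_pow_of_irreducible {P Q : F[X]} (hP : P.Monic) (hPirr : Irreducible P)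
    (hQ : Q.Monic) (hQirr : Irreducible Q) {i j : ℕ} (hi : i ≠ 0) (h : P ^ i = Q ^ j) :
    P = Q ∧ i = j := by
  have hdvd : P ∣ Q := hPirr.prime.dvd_of_dvd_pow (h ▸ dvd_pow_self P hi)
  obtain rfl := eq_of_monic_of_associated hP hQ (hPirr.associated_of_dvd hQirr hdvd)
  refine ⟨rfl, Nat.eq_of_mul_eq_mul_right hPirr.natDegree_pos ?_⟩
  rw [← natDegree_pow, ← natDegree_pow, h]

open scoped Classical in
theorem sum_vonMangoldt_dvd_eq_sum_primeFactors [Fintype F] {f : F[X]} (hf : f.Monic) :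
    ∑ k ∈ Finset.range (f.natDegree + 1), ∑ g ∈ monicOfDegree F k with g ∣ f, vonMangoldt g =
      ∑ P ∈ primeFactors f, ∑ j ∈ Finset.Icc 1 ((normalizedFactors f).count P),
        vonMangoldt (P ^ j) := by
  rw [Finset.sum_sigma', Finset.sum_sigma']
  symm
  refine Finset.sum_of_injOn (fun x ↦ ⟨(x.1 ^ x.2).natDegree, x.1 ^ x.2⟩) ?_ ?_ ?_ fun _ _ ↦ rfl
  · rintro ⟨P, i⟩ hPi ⟨Q, j⟩ hQj h
    simp only [Finset.coe_sigma, Set.mem_sigma_iff, Finset.mem_coe, Finset.mem_Icc,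
      mem_primeFactors] at hPi hQj
    obtain ⟨hP, hPirr⟩ := monic_and_irreducible_of_mem_normalizedFactors hPi.1
    obtain ⟨hQ, hQirr⟩ := monic_and_irreducible_of_mem_normalizedFactors hQj.1
    obtain ⟨rfl, rfl⟩ := pow_eq_pow_of_irreducible hP hPirr hQ hQirr
      (Nat.one_le_iff_ne_zero.mp hPi.2.1) (congrArg Sigma.snd h)
    rfl
  · rintro ⟨P, j⟩ hPj
    simp only [Finset.coe_sigma, Set.mem_sigma_iff, Finset.mem_coe, Finset.mem_Icc,
      mem_primeFactors, Finset.mem_range, Finset.mem_filter, mem_monicOfDegree] at hPj ⊢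
    obtain ⟨hP, hirr⟩ := monic_and_irreducible_of_mem_normalizedFactors hPj.1
    have hdvd := (pow_dvd_iff_le_count_normalizedFactors hf.ne_zero hP hirr).mpr hPj.2.2
    exact ⟨Nat.lt_succ_of_le (natDegree_le_of_dvd hdvd hf.ne_zero), ⟨hP.pow j, trivial⟩, hdvd⟩
  · rintro ⟨k, g⟩ hkg himage
    simp only [Finset.mem_sigma, Finset.mem_range, Finset.mem_filter, mem_monicOfDegree] at hkg
    obtain ⟨-, ⟨hg, rfl⟩, hgf⟩ := hkg
    by_contra hne
    obtain ⟨P, hP, hirr, j, hj, rfl⟩ := exists_pow_eq_of_vonMangoldt_ne_zero hg hne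
    have hle := (pow_dvd_iff_le_count_normalizedFactors hf.ne_zero hP hirr).mp hgf
    have hmem : P ∈ primeFactors f :=
      mem_primeFactors.mpr (Multiset.count_pos.mp ((Nat.pos_of_ne_zero hj).trans_le hle))
    refine himage ⟨⟨P, j⟩, ?_, rfl⟩
    exact Finset.mem_coe.mpr (Finset.mem_sigma.mpr
      ⟨hmem, Finset.mem_Icc.mpr ⟨Nat.one_le_iff_ne_zero.mpr hj, hle⟩⟩)

open scoped Classical in
theorem sum_vonMangoldt_dvd [Fintype F] {f : F[X]} (hf : f.Monic) :
    ∑ k ∈ Finset.range (f.natDegree + 1), ∑ g ∈ monicOfDegree F k with g ∣ f, vonMangoldt g =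
      f.natDegree := by
  rw [sum_vonMangoldt_dvd_eq_sum_primeFactors hf, natDegree_eq_sum_count_normalizedFactors hf]
  refine Finset.sum_congr rfl fun P hP ↦ ?_
  have hirr := (monic_and_irreducible_of_mem_normalizedFactors (mem_primeFactors.mp hP)).2
  rw [Finset.sum_congr rfl fun j hj ↦ vonMangoldt_pow_of_irreducible hirr
    (Nat.one_le_iff_ne_zero.mp (Finset.mem_Icc.mp hj).1), Finset.sum_const, Nat.card_Icc,
    Nat.add_sub_cancel, smul_eq_mul]

end VonMangoldt

section LSeries

theorem coeff_X_mul_derivative {A : Type*} [CommRing A] (f : PowerSeries A) (d : ℕ) :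
    PowerSeries.coeff d (PowerSeries.X * PowerSeries.derivative A f) =
      d * PowerSeries.coeff d f := by
  cases d with
  | zero => simp
  | succ d =>
    rw [PowerSeries.coeff_succ_X_mul, PowerSeries.coeff_derivative, mul_comm, Nat.cast_succ]

variable {F A : Type*} [Field F] [Fintype F] [DecidableEq F] [CommRing A]

/-- The generating series `∑_f ψ(f) T ^ deg f` over monic `f ∈ F[X]`, i.e. the `L`-series of the
completely multiplicative function `ψ`. -/
noncomputable def lSeries (ψ : F[X] →* A) : PowerSeries A :=
  PowerSeries.mk fun d ↦ ∑ f ∈ monicOfDegree F d, ψ f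

/-- The coefficients `∑_{deg g = n} Λ(g) ψ(g)` of the logarithmic derivative of the `L`-series. -/
noncomputable def vonMangoldtSum (ψ : F[X] →* A) (n : ℕ) : A :=
  ∑ g ∈ monicOfDegree F n, vonMangoldt g * ψ g

omit [DecidableEq F] in
open scoped Classical in
theorem sum_monicOfDegree_dvd (ψ : F[X] →* A) {g : F[X]} (hg : g.Monic) (e : ℕ) :
    ∑ f ∈ monicOfDegree F (g.natDegree + e) with g ∣ f, ψ f =
      ψ g * ∑ h ∈ monicOfDegree F e, ψ h := by
  rw [Finset.mul_sum]
  symm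
  refine Finset.sum_bij (fun h _ ↦ g * h) ?_ ?_ ?_ fun h _ ↦ (map_mul ψ g h).symm
  · intro h hh
    obtain ⟨hmonic, rfl⟩ := mem_monicOfDegree.mp hh
    exact Finset.mem_filter.mpr
      ⟨mem_monicOfDegree.mpr ⟨hg.mul hmonic, hg.natDegree_mul hmonic⟩, dvd_mul_right g h⟩
  · exact fun _ _ _ _ h ↦ mul_left_cancel₀ hg.ne_zero h
  · intro f hf
    obtain ⟨hf, h, rfl⟩ := Finset.mem_filter.mp hf
    obtain ⟨hgh, hdeg⟩ := mem_monicOfDegree.mp hf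
    have hh : h.Monic := hg.of_mul_monic_left hgh
    rw [hg.natDegree_mul hh, add_right_inj] at hdeg
    exact ⟨h, mem_monicOfDegree.mpr ⟨hh, hdeg⟩, rfl⟩

theorem natCast_mul_sum_monicOfDegree (ψ : F[X] →* A) (d : ℕ) :
    d * ∑ f ∈ monicOfDegree F d, ψ f =
      ∑ k ∈ Finset.range (d + 1), vonMangoldtSum ψ k * ∑ h ∈ monicOfDegree F (d - k), ψ h := by
  classical
  calc d * ∑ f ∈ monicOfDegree F d, ψ f
      = ∑ f ∈ monicOfDegree F d, ∑ k ∈ Finset.range (d + 1), ∑ g ∈ monicOfDegree F k,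
          if g ∣ f then vonMangoldt g * ψ f else 0 := by
        rw [Finset.mul_sum]
        refine Finset.sum_congr rfl fun f hf ↦ ?_
        obtain ⟨hmonic, rfl⟩ := mem_monicOfDegree.mp hf
        nth_rw 1 [← sum_vonMangoldt_dvd hmonic]
        push_cast
        rw [Finset.sum_mul]
        refine Finset.sum_congr rfl fun k _ ↦ ?_
        rw [Finset.sum_mul, Finset.sum_filter]
    _ = ∑ k ∈ Finset.range (d + 1), ∑ g ∈ monicOfDegree F k,
          vonMangoldt g * ∑ f ∈ monicOfDegree F d with g ∣ f, ψ f := by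
        rw [Finset.sum_comm]
        refine Finset.sum_congr rfl fun k _ ↦ ?_
        rw [Finset.sum_comm]
        refine Finset.sum_congr rfl fun g _ ↦ ?_
        rw [Finset.mul_sum, Finset.sum_filter]
    _ = ∑ k ∈ Finset.range (d + 1),
          vonMangoldtSum ψ k * ∑ h ∈ monicOfDegree F (d - k), ψ h := by
        refine Finset.sum_congr rfl fun k hk ↦ ?_
        rw [vonMangoldtSum, Finset.sum_mul]
        refine Finset.sum_congr rfl fun g hg ↦ ?_
        obtain ⟨hmonic, rfl⟩ := mem_monicOfDegree.mp hg
        obtain ⟨e, rfl⟩ := Nat.exists_eq_add_of_le (Nat.lt_succ_iff.mp (Finset.mem_range.mp hk))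
        rw [sum_monicOfDegree_dvd ψ hmonic, Nat.add_sub_cancel_left, mul_assoc]

theorem X_mul_derivative_lSeries (ψ : F[X] →* A) :
    PowerSeries.X * PowerSeries.derivative A (lSeries ψ) =
      PowerSeries.mk (vonMangoldtSum ψ) * lSeries ψ := by
  ext d
  rw [coeff_X_mul_derivative, PowerSeries.coeff_mul,
    Finset.Nat.sum_antidiagonal_eq_sum_range_succ_mk]
  simp only [lSeries, PowerSeries.coeff_mk]
  exact natCast_mul_sum_monicOfDegree ψ d

end LSeries

section RootPowerSums

variable {A : Type*} [CommRing A]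

/-- The series `∑_{n ≥ 1} (∑_{α ∈ s} α ^ n) T ^ n`. -/
noncomputable def powerSumSeries (s : Multiset A) : PowerSeries A :=
  PowerSeries.mk fun n ↦ if n = 0 then 0 else (s.map (· ^ n)).sum

theorem powerSumSeries_cons (α : A) (s : Multiset A) :
    powerSumSeries (α ::ₘ s) = powerSumSeries {α} + powerSumSeries s := by
  ext n
  by_cases hn : n = 0 <;> simp [powerSumSeries, hn]

theorem one_sub_mul_powerSumSeries_singleton (α : A) :
    (1 - PowerSeries.C α * PowerSeries.X) * powerSumSeries {α} =
      PowerSeries.C α * PowerSeries.X := by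
  ext n
  rw [sub_mul, one_mul, mul_assoc, map_sub, PowerSeries.coeff_C_mul, PowerSeries.coeff_C_mul]
  match n with
  | 0 => simp [powerSumSeries]
  | 1 => simp [powerSumSeries, PowerSeries.coeff_succ_X_mul]
  | n + 2 =>
    simp [powerSumSeries, PowerSeries.coeff_succ_X_mul, PowerSeries.coeff_X, pow_succ' α (n + 1)]

theorem X_mul_derivative_prod_one_sub (s : Multiset A) :
    PowerSeries.X * PowerSeries.derivative A
        (s.map fun α ↦ 1 - PowerSeries.C α * PowerSeries.X).prod =
      -((s.map fun α ↦ 1 - PowerSeries.C α * PowerSeries.X).prod * powerSumSeries s) := by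
  induction s using Multiset.induction_on with
  | empty =>
    have hzero : powerSumSeries (0 : Multiset A) = 0 := by ext; simp [powerSumSeries]
    simp [hzero]
  | cons α s ih =>
    have hderiv : PowerSeries.derivative A (1 - PowerSeries.C α * PowerSeries.X) =
        -PowerSeries.C α := by simp
    rw [Multiset.map_cons, Multiset.prod_cons, powerSumSeries_cons, Derivation.leibniz, hderiv,
      smul_eq_mul, smul_eq_mul]
    linear_combination (1 - PowerSeries.C α * PowerSeries.X) * ih +
      (s.map fun α ↦ 1 - PowerSeries.C α * PowerSeries.X).prod *
        one_sub_mul_powerSumSeries_singleton α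

/-- The sum of the `n`-th powers of the roots of `p`, counted with multiplicity. -/
noncomputable def rootPowerSum [IsDomain A] (n : ℕ) (p : A[X]) : A :=
  (p.roots.map (· ^ n)).sum

theorem reverse_X_sub_C [Nontrivial A] (α : A) : (X - C α).reverse = 1 - C α * X := by
  have hX : (X : A[X]).reverse = 1 := by
    rw [← mul_one X, reverse_X_mul, ← C_1, reverse_C]
  rw [sub_eq_add_neg, ← C_neg, reverse_add_C, hX, natDegree_X, pow_one, C_neg, neg_mul,
    ← sub_eq_add_neg]

theorem reverse_prod_X_sub_C [IsDomain A] (s : Multiset A) :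
    (s.map fun α ↦ X - C α).prod.reverse = (s.map fun α ↦ 1 - C α * X).prod := by
  induction s using Multiset.induction_on with
  | empty => simpa using reverse_C (1 : A)
  | cons α s ih => simp only [Multiset.map_cons, Multiset.prod_cons, reverse_mul_of_domain, ih,
      reverse_X_sub_C]

theorem coe_reverse_eq_prod_roots [IsDomain A] {p : A[X]} (hp : p.Monic) (hs : p.Splits) :
    (p.reverse : PowerSeries A) =
      (p.roots.map fun α ↦ 1 - PowerSeries.C α * PowerSeries.X).prod := by
  have hmap := map_multiset_prod (coeToPowerSeries.ringHom (R := A))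
    (p.roots.map fun α ↦ 1 - C α * X)
  rw [← reverse_prod_X_sub_C, ← hs.eq_prod_roots_of_monic hp, Multiset.map_map] at hmap
  simpa [Function.comp_def] using hmap

theorem vonMangoldtSum_eq_neg_rootPowerSum {F : Type*} [Field F] [Fintype F] [DecidableEq F]
    [IsDomain A] {ψ : F[X] →* A} {p : A[X]} (hp : p.Monic) (hs : p.Splits)
    (hψ : lSeries ψ = p.reverse) {n : ℕ} (hn : n ≠ 0) :
    vonMangoldtSum ψ n = -rootPowerSum n p := by
  have hder := X_mul_derivative_lSeries ψ
  rw [hψ, coe_reverse_eq_prod_roots hp hs, X_mul_derivative_prod_one_sub, mul_comm,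
    ← neg_mul] at hder
  have hne : (p.roots.map fun α ↦ 1 - PowerSeries.C α * PowerSeries.X).prod ≠ 0 := by
    rw [← coe_reverse_eq_prod_roots hp hs]
    simpa using hp.ne_zero
  have hcoeff := congrArg (PowerSeries.coeff n) (mul_right_cancel₀ hne hder)
  simpa [powerSumSeries, hn, rootPowerSum] using hcoeff.symm

end RootPowerSums

section ConjugatePolynomial

open Module

variable (F : Type*) {K : Type*} [Field F] [Fintype F] [Field K] [Finite K] [Algebra F K]

theorem pow_card_pow_eq_self_iff (a : K) (k : ℕ) :
    a ^ Fintype.card F ^ k = a ↔ (minpoly F a).natDegree ∣ k := by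
  have hint : IsIntegral F a := Algebra.IsIntegral.isIntegral a
  rw [(minpoly.irreducible hint).natDegree_dvd_iff_dvd_X_pow_card_pow_sub_X, minpoly.dvd_iff,
    Nat.card_eq_fintype_card]
  simp [sub_eq_zero]

omit [Finite K] in
theorem frobeniusAlgHom_pow_apply (a : K) (i : ℕ) :
    (FiniteField.frobeniusAlgHom F K ^ i) a = a ^ Fintype.card F ^ i := by
  rw [AlgHom.coe_pow, FiniteField.coe_frobeniusAlgHom, pow_iterate]

theorem injOn_pow_card_pow (a : K) :
    Set.InjOn (fun i ↦ a ^ Fintype.card F ^ i) (Set.Iio (minpoly F a).natDegree) := by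
  intro i hi j hj hij
  wlog hle : i ≤ j generalizing i j
  · exact (this hj hi hij.symm (le_of_not_ge hle)).symm
  obtain ⟨t, rfl⟩ := Nat.exists_eq_add_of_le hle
  have hfixed : a ^ Fintype.card F ^ t = a := by
    have hinj : Function.Injective (FiniteField.frobeniusAlgHom F K ^ i) := RingHom.injective _
    apply hinj
    rw [frobeniusAlgHom_pow_apply, frobeniusAlgHom_pow_apply, ← pow_mul, ← pow_add, add_comm t]
    exact hij.symm
  have ht := Nat.eq_zero_of_dvd_of_lt ((pow_card_pow_eq_self_iff F a t).mp hfixed)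
    ((Nat.le_add_left t i).trans_lt hj)
  rw [ht, add_zero]

omit [Finite K] in
theorem aeval_pow_card_pow_minpoly (a : K) (i : ℕ) :
    aeval (a ^ Fintype.card F ^ i) (minpoly F a) = 0 := by
  rw [← frobeniusAlgHom_pow_apply, aeval_algHom_apply, minpoly.aeval, map_zero]

theorem map_minpoly_eq_prod (a : K) :
    (minpoly F a).map (algebraMap F K) =
      ∏ i ∈ Finset.range (minpoly F a).natDegree, (X - C (a ^ Fintype.card F ^ i)) := by
  have hmonic := (minpoly.monic (Algebra.IsIntegral.isIntegral (R := F) a)).map (algebraMap F K)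
  refine (eq_of_monic_of_dvd_of_natDegree_le (monic_prod_X_sub_C _ _) hmonic
    (Finset.prod_dvd_of_coprime ?_ fun i _ ↦ ?_) ?_)
  · intro i hi j hj hij
    apply isCoprime_X_sub_C_of_isUnit_sub
    rw [isUnit_iff_ne_zero, sub_ne_zero]
    exact fun h ↦ hij (injOn_pow_card_pow F a (by simpa using hi) (by simpa using hj) h)
  · rw [dvd_iff_isRoot, IsRoot, eval_map_algebraMap, aeval_pow_card_pow_minpoly]
  · rw [natDegree_finsetProd_X_sub_C_eq_card, Finset.card_range, natDegree_map]

theorem map_minpoly_pow_eq_prod (a : K) (k : ℕ) :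
    (minpoly F a ^ k).map (algebraMap F K) =
      ∏ i ∈ Finset.range (k * (minpoly F a).natDegree), (X - C (a ^ Fintype.card F ^ i)) := by
  induction k with
  | zero => simp
  | succ k ih =>
    rw [pow_succ, Polynomial.map_mul, ih, map_minpoly_eq_prod, Nat.add_one_mul,
      Finset.prod_range_add]
    congr 1
    refine Finset.prod_congr rfl fun i _ ↦ ?_
    rw [pow_add, pow_mul, (pow_card_pow_eq_self_iff F a _).2 (Dvd.intro_left k rfl)]

/-- The characteristic polynomial over `F` of multiplication by `a` on `K`, encoded as a power of
the minimal polynomial. -/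
noncomputable def conjPoly (a : K) : F[X] :=
  minpoly F a ^ (finrank F K / (minpoly F a).natDegree)

theorem conjPoly_mem_monicOfDegree (a : K) : conjPoly F a ∈ monicOfDegree F (finrank F K) := by
  have hint : IsIntegral F a := Algebra.IsIntegral.isIntegral a
  rw [mem_monicOfDegree, conjPoly, natDegree_pow]
  exact ⟨(minpoly.monic hint).pow _, Nat.div_mul_cancel (minpoly.degree_dvd hint)⟩

theorem map_conjPoly (a : K) :
    (conjPoly F a).map (algebraMap F K) =
      ∏ i ∈ Finset.range (finrank F K), (X - C (a ^ Fintype.card F ^ i)) := by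
  rw [conjPoly, map_minpoly_pow_eq_prod,
    Nat.div_mul_cancel (minpoly.degree_dvd (Algebra.IsIntegral.isIntegral a))]

theorem algebraMap_coeff_reverse_conjPoly (a : K) (k : ℕ) :
    algebraMap F K ((conjPoly F a).reverse.coeff k) =
      (-1) ^ k * traceFn (Fintype.card F) (finrank F K) k a := by
  have hdeg := (mem_monicOfDegree.mp (conjPoly_mem_monicOfDegree F a)).2
  rw [traceFn]
  rcases le_or_gt k (finrank F K) with hk | hk
  · rw [coeff_reverse, hdeg, revAt_le hk, ← coeff_map, map_conjPoly]
    simp_rw [sub_eq_add_neg, ← C_neg]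
    rw [Finset.prod_X_add_C_coeff _ _ (by simp), Finset.card_range, Nat.sub_sub_self hk,
      Finset.mul_sum]
    refine Finset.sum_congr rfl fun S hS ↦ ?_
    rw [Finset.prod_neg, (Finset.mem_powersetCard.mp hS).2]
  · rw [Finset.powersetCard_eq_empty.mpr (by simpa using hk), Finset.sum_empty, mul_zero,
      coeff_eq_zero_of_natDegree_lt, map_zero]
    exact (reverse_natDegree_le _).trans_lt (hdeg ▸ hk)

omit [Fintype F] in
theorem splits_map_of_natDegree_dvd_finrank [Finite F] {P : F[X]} (hirr : Irreducible P)
    (hdvd : P.natDegree ∣ finrank F K) : (P.map (algebraMap F K)).Splits := by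
  have := Fintype.ofFinite K
  rw [hirr.natDegree_dvd_iff_dvd_X_pow_card_pow_sub_X, ← Module.natCard_eq_pow_finrank,
    Nat.card_eq_fintype_card] at hdvd
  have hmap := Polynomial.map_dvd (algebraMap F K) hdvd
  simp only [Polynomial.map_sub, Polynomial.map_pow, map_X] at hmap
  refine Splits.of_dvd ?_ (FiniteField.X_pow_card_sub_X_ne_zero K Fintype.one_lt_card) hmap
  have h := (FiniteField.isSplittingField_sub K F).splits
  simpa only [Polynomial.map_sub, Polynomial.map_pow, map_X] using h

omit [Fintype F] in
theorem card_minpoly_eq_natDegree [Finite F] {P : F[X]} (hP : P.Monic)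
    (hirr : Irreducible P) (hdvd : P.natDegree ∣ finrank F K) :
    Nat.card {a : K // minpoly F a = P} = P.natDegree := by
  classical
  rw [← card_rootSet_eq_natDegree (PerfectField.separable_of_irreducible hirr)
    (splits_map_of_natDegree_dvd_finrank F hirr hdvd), ← Nat.card_eq_fintype_card]
  refine Nat.card_congr (Equiv.subtypeEquivRight fun a ↦ ?_)
  rw [mem_rootSet_of_ne hP.ne_zero]
  refine ⟨?_, fun h ↦ (minpoly.eq_of_irreducible_of_monic hirr h hP).symm⟩
  rintro rfl
  exact minpoly.aeval F a

omit [Fintype F] in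
theorem conjPoly_exponent_ne_zero (a : K) : finrank F K / (minpoly F a).natDegree ≠ 0 := by
  have hint : IsIntegral F a := Algebra.IsIntegral.isIntegral a
  exact (Nat.div_pos (Nat.le_of_dvd finrank_pos (minpoly.degree_dvd hint))
    (minpoly.natDegree_pos hint)).ne'

omit [Fintype F] in
theorem conjPoly_eq_pow_iff {P : F[X]} (hP : P.Monic) (hirr : Irreducible P) {j : ℕ}
    (hdeg : (P ^ j).natDegree = finrank F K) (a : K) :
    conjPoly F a = P ^ j ↔ minpoly F a = P := by
  have hint : IsIntegral F a := Algebra.IsIntegral.isIntegral a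
  constructor
  · exact fun h ↦ (pow_eq_pow_of_irreducible (minpoly.monic hint) (minpoly.irreducible hint) hP
      hirr (conjPoly_exponent_ne_zero F a) h).1
  · rintro rfl
    rw [conjPoly, ← hdeg, natDegree_pow, Nat.mul_div_cancel _ (minpoly.natDegree_pos hint)]

theorem card_conjPoly_eq [DecidableEq F] {g : F[X]} (hg : g ∈ monicOfDegree F (finrank F K)) :
    Nat.card {a : K // conjPoly F a = g} = vonMangoldt g := by
  obtain ⟨hmonic, hdeg⟩ := mem_monicOfDegree.mp hg
  by_cases hne : vonMangoldt g = 0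
  · rw [hne, Nat.card_eq_zero]
    refine Or.inl ⟨?_⟩
    rintro ⟨a, rfl⟩
    have hint : IsIntegral F a := Algebra.IsIntegral.isIntegral a
    rw [conjPoly, vonMangoldt_pow_of_irreducible (minpoly.irreducible hint)
      (conjPoly_exponent_ne_zero F a)] at hne
    exact (minpoly.natDegree_pos hint).ne' hne
  · obtain ⟨P, hP, hirr, j, hj, rfl⟩ := exists_pow_eq_of_vonMangoldt_ne_zero hmonic hne
    rw [Nat.card_congr (Equiv.subtypeEquivRight (conjPoly_eq_pow_iff F hP hirr hdeg)),
      vonMangoldt_pow_of_irreducible hirr hj]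
    refine card_minpoly_eq_natDegree F hP hirr ?_
    rw [← hdeg, natDegree_pow]
    exact dvd_mul_left _ _

theorem sum_conjPoly_eq_vonMangoldtSum [Fintype K] [DecidableEq F] {A : Type*} [CommRing A]
    (ψ : F[X] →* A) :
    ∑ a : K, ψ (conjPoly F a) = vonMangoldtSum ψ (finrank F K) := by
  classical
  rw [← Finset.sum_fiberwise_of_maps_to (fun a _ ↦ conjPoly_mem_monicOfDegree F a), vonMangoldtSum]
  refine Finset.sum_congr rfl fun g hg ↦ ?_
  rw [← card_conjPoly_eq F hg, Nat.card_eq_fintype_card, Fintype.card_subtype, ← nsmul_eq_mul]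
  exact Finset.sum_eq_card_nsmul fun a ha ↦ by rw [(Finset.mem_filter.mp ha).2]

end ConjugatePolynomial

theorem reverse_X_mul_add_C {R : Type*} [Semiring R] {g : R[X]} (hg : g ≠ 0) (b : R) :
    (X * g + C b).reverse = g.reverse + C b * X ^ (g.natDegree + 1) := by
  have : Nontrivial R := nontrivial_of_ne _ _ (leadingCoeff_ne_zero.mpr hg)
  rw [reverse_add_C, natDegree_X_mul hg, reverse_X_mul]

section SumReverse

variable {R M : Type*} [Semiring R] [Nontrivial R] [Fintype R] [AddCommMonoid M] (φ : R[X] → M)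

theorem sum_monicOfDegree_succ_reverse (d : ℕ) :
    ∑ f ∈ monicOfDegree R (d + 1), φ f.reverse =
      ∑ g ∈ monicOfDegree R d, ∑ b : R, φ (g.reverse + C b * X ^ (d + 1)) := by
  rw [sum_monicOfDegree_succ]
  refine Finset.sum_congr rfl fun g hg ↦ Finset.sum_congr rfl fun b _ ↦ ?_
  obtain ⟨hmonic, rfl⟩ := mem_monicOfDegree.mp hg
  rw [reverse_X_mul_add_C hmonic.ne_zero]

theorem sum_monicOfDegree_one_reverse :
    ∑ f ∈ monicOfDegree R 1, φ f.reverse = ∑ a : R, φ (1 + C a * X) := by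
  rw [sum_monicOfDegree_succ_reverse, monicOfDegree, Finset.sum_singleton, ← C_1, reverse_C,
    zero_add, pow_one]

theorem sum_monicOfDegree_two_reverse :
    ∑ f ∈ monicOfDegree R 2, φ f.reverse = ∑ a : R, ∑ b : R, φ (1 + C a * X + C b * X ^ 2) := by
  rw [sum_monicOfDegree_succ_reverse,
    sum_monicOfDegree_one_reverse fun f ↦ ∑ b : R, φ (f + C b * X ^ (1 + 1))]

theorem sum_monicOfDegree_three_reverse :
    ∑ f ∈ monicOfDegree R 3, φ f.reverse =
      ∑ a : R, ∑ b : R, ∑ c : R, φ (1 + C a * X + C b * X ^ 2 + C c * X ^ 3) := by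
  rw [sum_monicOfDegree_succ_reverse,
    sum_monicOfDegree_two_reverse fun f ↦ ∑ c : R, φ (f + C c * X ^ (2 + 1))]

theorem sum_monicOfDegree_four_reverse :
    ∑ f ∈ monicOfDegree R 4, φ f.reverse =
      ∑ a : R, ∑ b : R, ∑ c : R, ∑ d : R,
        φ (1 + C a * X + C b * X ^ 2 + C c * X ^ 3 + C d * X ^ 4) := by
  rw [sum_monicOfDegree_succ_reverse,
    sum_monicOfDegree_three_reverse fun f ↦ ∑ d : R, φ (f + C d * X ^ (3 + 1))]

end SumReverse

section UnitLogarithm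

/-- The `ZMod 8` component of the isomorphism of `(1 + X 𝔽₂[X]) / (X ^ 5)` with `ZMod 8 × ZMod 2`
sending `1 + X` to `(1, 0)` and `1 + X ^ 3` to `(0, 1)`. The binary digits `i, j, k` are read off
from `(1 + X) ^ i * (1 + X ^ 2) ^ j * (1 + X ^ 4) ^ k * (1 + X ^ 3) ^ l`, whose coefficients of
`X, …, X ^ 4` are `i`, `j`, `l + i * j` and `k + i * l`. -/
def unitLogEight (f : (ZMod 2)[X]) : ZMod 8 :=
  ((f.coeff 1).val + 2 * (f.coeff 2).val +
    4 * (f.coeff 4 + f.coeff 1 * f.coeff 3 + f.coeff 1 * f.coeff 2).val : ℕ)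

/-- The `ZMod 2` component of the isomorphism of `(1 + X 𝔽₂[X]) / (X ^ 5)` with `ZMod 8 × ZMod 2`
sending `1 + X` to `(1, 0)` and `1 + X ^ 3` to `(0, 1)`. -/
def unitLogTwo (f : (ZMod 2)[X]) : ZMod 2 :=
  f.coeff 3 + f.coeff 1 * f.coeff 2

theorem unitLog_eq_iff (f : (ZMod 2)[X]) :
    unitLogEight f = 1 ∧ unitLogTwo f = 0 ↔
      f.coeff 1 = 1 ∧ f.coeff 2 = 0 ∧ f.coeff 3 = 0 ∧ f.coeff 4 = 0 := by
  unfold unitLogEight unitLogTwo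
  generalize f.coeff 1 = a, f.coeff 2 = b, f.coeff 3 = c, f.coeff 4 = d
  revert a b c d
  decide

theorem unitLogEight_mul {f g : (ZMod 2)[X]} (hf : f.coeff 0 = 1) (hg : g.coeff 0 = 1) :
    unitLogEight (f * g) = unitLogEight f + unitLogEight g := by
  simp only [unitLogEight, coeff_mul, Finset.Nat.sum_antidiagonal_eq_sum_range_succ_mk,
    Finset.sum_range_succ, Finset.sum_range_zero, Nat.sub_zero, Nat.reduceSub, hf, hg, zero_add,
    one_mul, mul_one]
  generalize f.coeff 1 = a, f.coeff 2 = b, f.coeff 3 = c, f.coeff 4 = d,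
    g.coeff 1 = a', g.coeff 2 = b', g.coeff 3 = c', g.coeff 4 = d'
  revert a b c d a' b' c' d'
  decide

theorem unitLogTwo_mul {f g : (ZMod 2)[X]} (hf : f.coeff 0 = 1) (hg : g.coeff 0 = 1) :
    unitLogTwo (f * g) = unitLogTwo f + unitLogTwo g := by
  simp only [unitLogTwo, coeff_mul, Finset.Nat.sum_antidiagonal_eq_sum_range_succ_mk,
    Finset.sum_range_succ, Finset.sum_range_zero, Nat.sub_zero, Nat.reduceSub, hf, hg, zero_add,
    one_mul, mul_one]
  generalize f.coeff 1 = a, f.coeff 2 = b, f.coeff 3 = c, g.coeff 1 = a', g.coeff 2 = b',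
    g.coeff 3 = c'
  revert a b c a' b' c'
  decide

theorem coeff_zero_reverse_eq_one {f : (ZMod 2)[X]} (hf : f ≠ 0) : f.reverse.coeff 0 = 1 := by
  rw [coeff_zero_reverse]
  exact (by decide : ∀ a : ZMod 2, a ≠ 0 → a = 1) _ (leadingCoeff_ne_zero.mpr hf)

end UnitLogarithm

section UnitCharacter

variable {A : Type*} [CommRing A] {ζ ε : A}

/-- The character of `(1 + X 𝔽₂[X]) / (X ^ 5)` sending `1 + X` to `ζ` and `1 + X ^ 3` to `ε`, for
`ζ ^ 8 = 1` and `ε ^ 2 = 1`. -/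
noncomputable def unitChar (ζ ε : A) (f : (ZMod 2)[X]) : A :=
  ζ ^ (unitLogEight f).val * ε ^ (unitLogTwo f).val

theorem unitChar_apply (hζ : ζ ^ 8 = 1) (f : (ZMod 2)[X]) :
    unitChar ζ ε f =
      ζ ^ ((f.coeff 1).val + 2 * (f.coeff 2).val +
        4 * (f.coeff 4 + f.coeff 1 * f.coeff 3 + f.coeff 1 * f.coeff 2).val) *
      ε ^ (f.coeff 3 + f.coeff 1 * f.coeff 2).val := by
  rw [unitChar, unitLogEight, unitLogTwo, ZMod.val_natCast, ← pow_eq_pow_mod _ hζ]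

theorem unitChar_mul (hζ : ζ ^ 8 = 1) (hε : ε ^ 2 = 1) {f g : (ZMod 2)[X]} (hf : f.coeff 0 = 1)
    (hg : g.coeff 0 = 1) : unitChar ζ ε (f * g) = unitChar ζ ε f * unitChar ζ ε g := by
  rw [unitChar, unitLogEight_mul hf hg, unitLogTwo_mul hf hg, ZMod.val_add, ZMod.val_add,
    ← pow_eq_pow_mod _ hζ, ← pow_eq_pow_mod _ hε, pow_add, pow_add, mul_mul_mul_comm, unitChar,
    unitChar]

/-- The multiplicative function `f ↦ unitChar f.reverse` on monic polynomials over `𝔽₂`, extended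
by `0` to the zero polynomial. -/
noncomputable def leadingChar (hζ : ζ ^ 8 = 1) (hε : ε ^ 2 = 1) : (ZMod 2)[X] →* A where
  toFun f := if f = 0 then 0 else unitChar ζ ε f.reverse
  map_one' := by
    rw [if_neg one_ne_zero, ← C_1, reverse_C, unitChar_apply hζ]
    simp [coeff_one]
  map_mul' f g := by
    by_cases hf : f = 0
    · rw [if_pos hf, if_pos (by rw [hf, zero_mul]), zero_mul]
    by_cases hg : g = 0
    · rw [if_pos hg, if_pos (by rw [hg, mul_zero]), mul_zero]
    rw [if_neg hf, if_neg hg, if_neg (mul_ne_zero hf hg), reverse_mul_of_domain,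
      unitChar_mul hζ hε (coeff_zero_reverse_eq_one hf) (coeff_zero_reverse_eq_one hg)]

theorem leadingChar_apply (hζ : ζ ^ 8 = 1) (hε : ε ^ 2 = 1) {f : (ZMod 2)[X]} (hf : f ≠ 0) :
    leadingChar hζ hε f = unitChar ζ ε f.reverse :=
  if_neg hf

theorem sum_leadingChar_eq_sum_unitChar (hζ : ζ ^ 8 = 1) (hε : ε ^ 2 = 1) (d : ℕ) :
    ∑ f ∈ monicOfDegree (ZMod 2) d, leadingChar hζ hε f =
      ∑ f ∈ monicOfDegree (ZMod 2) d, unitChar ζ ε f.reverse :=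
  Finset.sum_congr rfl fun _ hf ↦ leadingChar_apply hζ hε (mem_monicOfDegree.mp hf).1.ne_zero

theorem sum_zmod_two (g : ZMod 2 → A) : ∑ a, g a = g 0 + g 1 :=
  Fin.sum_univ_two g

theorem sum_leadingChar_one (hζ : ζ ^ 8 = 1) (hε : ε ^ 2 = 1) :
    ∑ f ∈ monicOfDegree (ZMod 2) 1, leadingChar hζ hε f = 1 + ζ := by
  rw [sum_leadingChar_eq_sum_unitChar, sum_monicOfDegree_one_reverse]
  simp [sum_zmod_two, unitChar_apply hζ, coeff_one, ZMod.val_one]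

theorem sum_leadingChar_two (hζ : ζ ^ 8 = 1) (hε : ε ^ 2 = 1) :
    ∑ f ∈ monicOfDegree (ZMod 2) 2, leadingChar hζ hε f = 1 + ζ + ζ ^ 2 + ε * ζ ^ 7 := by
  rw [sum_leadingChar_eq_sum_unitChar, sum_monicOfDegree_two_reverse]
  simp only [unitChar_apply hζ, coeff_add, coeff_one, one_ne_zero, ↓reduceIte, coeff_mul_X,
    coeff_C_zero, zero_add, coeff_C_mul, coeff_X_pow, OfNat.one_ne_ofNat, mul_zero, add_zero,
    OfNat.ofNat_ne_zero, coeff_C_succ, CharTwo.add_self_eq_zero, mul_one, Nat.reduceEqDiff,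
    Nat.succ_ne_self, sum_zmod_two, ZMod.val_zero, pow_zero, ZMod.val_one, pow_one, Nat.reduceAdd]
  ring

theorem sum_leadingChar_three (hζ : ζ ^ 8 = 1) (hε : ε ^ 2 = 1) :
    ∑ f ∈ monicOfDegree (ZMod 2) 3, leadingChar hζ hε f =
      1 + ζ + ζ ^ 2 + ζ ^ 3 + ε * (1 + ζ ^ 2 + ζ ^ 5 + ζ ^ 7) := by
  rw [sum_leadingChar_eq_sum_unitChar, sum_monicOfDegree_three_reverse]
  simp only [unitChar_apply hζ, coeff_add, coeff_one, one_ne_zero, ↓reduceIte, coeff_mul_X,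
    coeff_C_zero, zero_add, coeff_C_mul, coeff_X_pow, OfNat.one_ne_ofNat, mul_zero, add_zero,
    OfNat.ofNat_ne_zero, coeff_C_succ, CharTwo.add_self_eq_zero, mul_one, Nat.reduceEqDiff,
    Nat.succ_ne_self, sum_zmod_two, ZMod.val_zero, pow_zero, ZMod.val_one, pow_one, one_mul,
    Nat.reduceAdd]
  ring

theorem sum_leadingChar_four (hζ : ζ ^ 8 = 1) (hε : ε ^ 2 = 1) :
    ∑ f ∈ monicOfDegree (ZMod 2) 4, leadingChar hζ hε f =
      (1 + ε) * ((1 + ζ) * (1 + ζ ^ 2) * (1 + ζ ^ 4)) := by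
  rw [sum_leadingChar_eq_sum_unitChar, sum_monicOfDegree_four_reverse]
  simp only [unitChar_apply hζ, coeff_add, coeff_one, one_ne_zero, ↓reduceIte, coeff_mul_X,
    coeff_C_zero, zero_add, coeff_C_mul, coeff_X_pow, OfNat.one_ne_ofNat, mul_zero, add_zero,
    OfNat.ofNat_ne_zero, coeff_C_succ, CharTwo.add_self_eq_zero, mul_one, Nat.reduceEqDiff,
    Nat.succ_ne_self, sum_zmod_two, ZMod.val_zero, pow_zero, ZMod.val_one, pow_one, one_mul,
    Nat.reduceAdd]
  ring

theorem sum_leadingChar_eq_zero (hζ : ζ ^ 8 = 1) (hε : ε ^ 2 = 1)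
    (hvanish : (1 + ε) * ((1 + ζ) * (1 + ζ ^ 2) * (1 + ζ ^ 4)) = 0) {d : ℕ} (hd : 4 ≤ d) :
    ∑ f ∈ monicOfDegree (ZMod 2) d, leadingChar hζ hε f = 0 := by
  induction d, hd using Nat.le_induction with
  | base => rw [sum_leadingChar_four, hvanish]
  | succ d hd ih =>
    have hchar (f : (ZMod 2)[X]) (b : ZMod 2) :
        unitChar ζ ε (f + C b * X ^ (d + 1)) = unitChar ζ ε f := by
      have hcoeff {i : ℕ} (hi : i ≤ 4) : (f + C b * X ^ (d + 1)).coeff i = f.coeff i := by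
        rw [coeff_add, coeff_C_mul_X_pow, if_neg (by lia), add_zero]
      rw [unitChar_apply hζ, unitChar_apply hζ, hcoeff (i := 1) (by simp),
        hcoeff (i := 2) (by simp), hcoeff (i := 3) (by simp), hcoeff (i := 4) le_rfl]
    rw [sum_leadingChar_eq_sum_unitChar] at ih
    rw [sum_leadingChar_eq_sum_unitChar, sum_monicOfDegree_succ_reverse]
    simp only [hchar, Finset.sum_const, ← Finset.smul_sum, ih, smul_zero]

/-- The polynomial whose reverse is the `L`-series of a nontrivial `leadingChar`. -/
noncomputable def leadingCharPoly (ζ ε : A) : A[X] :=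
  Cubic.toPoly ⟨1, 1 + ζ, 1 + ζ + ζ ^ 2 + ε * ζ ^ 7,
    1 + ζ + ζ ^ 2 + ζ ^ 3 + ε * (1 + ζ ^ 2 + ζ ^ 5 + ζ ^ 7)⟩

theorem lSeries_leadingChar [Nontrivial A] (hζ : ζ ^ 8 = 1) (hε : ε ^ 2 = 1)
    (hvanish : (1 + ε) * ((1 + ζ) * (1 + ζ ^ 2) * (1 + ζ ^ 4)) = 0) :
    lSeries (leadingChar hζ hε) = (leadingCharPoly ζ ε).reverse := by
  ext d
  rw [lSeries, PowerSeries.coeff_mk, coeff_coe, coeff_reverse, leadingCharPoly,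
    Cubic.natDegree_of_a_ne_zero' one_ne_zero]
  match d with
  | 0 => rw [revAt_le (by simp), Cubic.coeff_eq_a, monicOfDegree, Finset.sum_singleton, map_one]
  | 1 => rw [revAt_le (by simp), Cubic.coeff_eq_b, sum_leadingChar_one]
  | 2 => rw [revAt_le (by simp), Cubic.coeff_eq_c, sum_leadingChar_two]
  | 3 => rw [revAt_le (by simp), Cubic.coeff_eq_d, sum_leadingChar_three]
  | d + 4 => rw [revAt_eq_self_of_lt (by lia), Cubic.coeff_eq_zero (by lia),
      sum_leadingChar_eq_zero hζ hε hvanish (by lia)]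

end UnitCharacter

section RootsOfUnity

variable {A M : Type*}

theorem sum_nthRootsFinset_eq_sum_divisors [CommRing A] [IsDomain A] [AddCommMonoid M] (k : ℕ)
    (g : A → M) :
    ∑ ξ ∈ nthRootsFinset k (1 : A), g ξ = ∑ d ∈ k.divisors, ∑ ξ ∈ primitiveRoots d A, g ξ := by
  classical
  rw [IsPrimitiveRoot.nthRoots_one_eq_biUnion_primitiveRoots, Finset.sum_biUnion]
  exact fun _ _ _ _ h ↦ IsPrimitiveRoot.disjoint h

theorem sum_nthRootsFinset_eq_sum_range [CommRing A] [IsDomain A] [AddCommMonoid M] {k : ℕ}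
    [NeZero k] {η : A} (hη : IsPrimitiveRoot η k) (g : A → M) :
    ∑ ξ ∈ nthRootsFinset k (1 : A), g ξ = ∑ i ∈ Finset.range k, g (η ^ i) := by
  symm
  refine Finset.sum_bij (fun i _ ↦ η ^ i) (fun i _ ↦ ?_) (fun i hi j hj h ↦ ?_) (fun ξ hξ ↦ ?_)
    fun _ _ ↦ rfl
  · rw [mem_nthRootsFinset (NeZero.pos k), pow_right_comm, hη.pow_eq_one, one_pow]
  · exact hη.pow_inj (Finset.mem_range.mp hi) (Finset.mem_range.mp hj) h
  · obtain ⟨i, hi, h⟩ := hη.eq_pow_of_pow_eq_one ((mem_nthRootsFinset (NeZero.pos k) _).mp hξ)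
    exact ⟨i, Finset.mem_range.mpr hi, h⟩

theorem prod_primitiveRoots_eq_prod_range [CommRing A] [IsDomain A] [CommMonoid M] {k : ℕ}
    [NeZero k] {η : A} (hη : IsPrimitiveRoot η k) (g : A → M) :
    ∏ ξ ∈ primitiveRoots k A, g ξ = ∏ i ∈ Finset.range k with i.Coprime k, g (η ^ i) := by
  symm
  refine Finset.prod_bij (fun i _ ↦ η ^ i) (fun i hi ↦ ?_) (fun i hi j hj h ↦ ?_) (fun ξ hξ ↦ ?_)
    fun _ _ ↦ rfl
  · rw [mem_primitiveRoots (NeZero.pos k)]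
    exact hη.pow_of_coprime i (Finset.mem_filter.mp hi).2
  · simp only [Finset.mem_filter, Finset.mem_range] at hi hj
    exact hη.pow_inj hi.1 hj.1 h
  · rw [mem_primitiveRoots (NeZero.pos k), hη.isPrimitiveRoot_iff] at hξ
    obtain ⟨i, hi, hcop, h⟩ := hξ
    exact ⟨i, Finset.mem_filter.mpr ⟨Finset.mem_range.mpr hi, hcop⟩, h⟩

theorem sum_nthRootsFinset_inv_mul_pow_val [Field A] {k : ℕ} [Fact (1 < k)] {η : A}
    (hη : IsPrimitiveRoot η k) (m : ZMod k) :
    ∑ ξ ∈ nthRootsFinset k (1 : A), ξ⁻¹ * ξ ^ m.val = if m = 1 then (k : A) else 0 := by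
  have hk : 1 < k := Fact.out
  have : NeZero k := ⟨by lia⟩
  have hη₀ : η ≠ 0 := hη.ne_zero (by lia)
  have hterm (i : ℕ) : (η ^ i)⁻¹ * (η ^ i) ^ m.val = (η⁻¹ * η ^ m.val) ^ i := by
    rw [mul_pow, inv_pow, pow_right_comm]
  simp only [sum_nthRootsFinset_eq_sum_range hη, hterm]
  split_ifs with hm
  · simp [hm, ZMod.val_one, hη₀]
  · have hne : η⁻¹ * η ^ m.val ≠ 1 := fun h ↦ hm <| by
      rw [inv_mul_eq_one₀ hη₀] at h
      have hval := hη.pow_inj hk m.val_lt (by rwa [pow_one])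
      rw [← m.natCast_zmod_val, ← hval, Nat.cast_one]
    refine (mul_eq_zero.mp ?_).resolve_left (sub_ne_zero.mpr hne)
    rw [mul_geom_sum, mul_pow, inv_pow, pow_right_comm, hη.pow_eq_one, one_pow, inv_one, mul_one,
      sub_self]

theorem primitiveRoots_two [CommRing A] [IsDomain A] [NeZero (2 : A)] :
    primitiveRoots 2 A = {-1} := by
  have hchar : ringChar A ≠ 2 := fun h ↦ two_ne_zero (α := A) <| by
    exact_mod_cast (ringChar.spec A 2).mpr h.dvd
  ext ξ
  rw [mem_primitiveRoots two_pos, Finset.mem_singleton]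
  exact ⟨IsPrimitiveRoot.eq_neg_one_of_two_right, fun h ↦ h ▸ IsPrimitiveRoot.neg_one _ hchar⟩

theorem sq_eq_neg_one_of_isPrimitiveRoot_four [CommRing A] [IsDomain A] {η : A}
    (hη : IsPrimitiveRoot η 4) : η ^ 2 = -1 :=
  (hη.pow four_pos (by simp) : IsPrimitiveRoot (η ^ 2) 2).eq_neg_one_of_two_right

theorem pow_four_eq_neg_one_of_isPrimitiveRoot_eight [CommRing A] [IsDomain A] {η : A}
    (hη : IsPrimitiveRoot η 8) : η ^ 4 = -1 :=
  (hη.pow (by simp) (by simp) : IsPrimitiveRoot (η ^ 4) 2).eq_neg_one_of_two_right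

theorem prod_primitiveRoots_four [CommRing A] [IsDomain A] [CommMonoid M] {η : A}
    (hη : IsPrimitiveRoot η 4) (g : A → M) :
    ∏ ξ ∈ primitiveRoots 4 A, g ξ = g η * g (η ^ 3) := by
  rw [prod_primitiveRoots_eq_prod_range hη,
    show {i ∈ Finset.range 4 | i.Coprime 4} = {1, 3} by decide, Finset.prod_pair (by simp), pow_one]

theorem prod_primitiveRoots_eight [CommRing A] [IsDomain A] [CommMonoid M] {η : A}
    (hη : IsPrimitiveRoot η 8) (g : A → M) :
    ∏ ξ ∈ primitiveRoots 8 A, g ξ = (g η * g (η ^ 5)) * (g (η ^ 3) * g (η ^ 7)) := by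
  rw [prod_primitiveRoots_eq_prod_range hη,
    show {i ∈ Finset.range 8 | i.Coprime 8} = {1, 5, 3, 7} by decide]
  simp [mul_assoc]

end RootsOfUnity

section Counting

open Module

variable {A : Type*} [Field A]

theorem unitChar_one_one (f : (ZMod 2)[X]) : unitChar (1 : A) 1 f = 1 := by
  rw [unitChar, one_pow, one_pow, one_mul]

theorem one_add_mul_one_add_sq_mul_eq_zero {ζ : A} (hζ : ζ ^ 8 = 1) (hne : ζ ≠ 1) :
    (1 + ζ) * (1 + ζ ^ 2) * (1 + ζ ^ 4) = 0 :=
  (mul_eq_zero.mp (by linear_combination hζ :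
    (ζ - 1) * ((1 + ζ) * (1 + ζ ^ 2) * (1 + ζ ^ 4)) = 0)).resolve_left (sub_ne_zero.mpr hne)

theorem one_pow_add_neg_one_pow_val (m : ZMod 2) :
    (1 : A) ^ m.val + (-1) ^ m.val = if m = 0 then 2 else 0 := by
  match m with
  | 0 => simp [one_add_one_eq_two]
  | 1 => simp [ZMod.val_one]

theorem sum_inv_mul_unitChar {η : A} (hη : IsPrimitiveRoot η 8) (f : (ZMod 2)[X]) :
    ∑ ξ ∈ nthRootsFinset 8 (1 : A), ξ⁻¹ * (unitChar ξ 1 f + unitChar ξ (-1) f) =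
      if f.coeff 1 = 1 ∧ f.coeff 2 = 0 ∧ f.coeff 3 = 0 ∧ f.coeff 4 = 0 then 16 else 0 := by
  have : Fact (1 < 8) := ⟨by simp⟩
  simp only [unitChar, ← mul_add, ← mul_assoc, one_pow_add_neg_one_pow_val, ← Finset.sum_mul,
    sum_nthRootsFinset_inv_mul_pow_val hη, ← unitLog_eq_iff, ite_zero_mul_ite_zero]
  norm_num

theorem leadingCharPoly_monic {ζ ε : A} : (leadingCharPoly ζ ε).Monic :=
  Cubic.monic_of_a_eq_one'

theorem coeff_reverse_conjPoly_eq_iff {K : Type*} [Field K] [Finite K]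
    [Algebra (ZMod 2) K] (a : K) (k : ℕ) (t : ZMod 2) :
    (conjPoly (ZMod 2) a).reverse.coeff k = t ↔
      traceFn 2 (finrank (ZMod 2) K) k a = algebraMap (ZMod 2) K t := by
  have : CharP K 2 := charP_of_injective_algebraMap (algebraMap (ZMod 2) K).injective 2
  rw [← (algebraMap (ZMod 2) K).injective.eq_iff, algebraMap_coeff_reverse_conjPoly, ZMod.card,
    CharTwo.neg_eq, one_pow, one_mul]

variable (K : Type*) [Field K] [Fintype K] [Algebra (ZMod 2) K]

theorem sum_unitChar_conjPoly [IsAlgClosed A] {ζ ε : A} (hζ : ζ ^ 8 = 1) (hε : ε ^ 2 = 1)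
    (hvanish : (1 + ε) * ((1 + ζ) * (1 + ζ ^ 2) * (1 + ζ ^ 4)) = 0) :
    ∑ a : K, unitChar ζ ε (conjPoly (ZMod 2) a).reverse =
      -rootPowerSum (finrank (ZMod 2) K) (leadingCharPoly ζ ε) := by
  rw [← vonMangoldtSum_eq_neg_rootPowerSum leadingCharPoly_monic (IsAlgClosed.splits _)
    (lSeries_leadingChar hζ hε hvanish) finrank_pos.ne', ← sum_conjPoly_eq_vonMangoldtSum]
  refine Finset.sum_congr rfl fun a _ ↦ (leadingChar_apply hζ hε ?_).symm
  exact (mem_monicOfDegree.mp (conjPoly_mem_monicOfDegree (ZMod 2) a)).1.ne_zero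

/-- The sum over `K` of the two characters of the conjugate polynomial that send `1 + X` to `ζ`. -/
noncomputable def pairCharSum (ζ : A) : A :=
  ∑ a : K, (unitChar ζ 1 (conjPoly (ZMod 2) a).reverse +
    unitChar ζ (-1) (conjPoly (ZMod 2) a).reverse)

/-- The sum of the `n`-th powers of the reciprocal roots of the `L`-series of the two characters
that send `1 + X` to `ζ`. -/
noncomputable def pairPowerSum (n : ℕ) (ζ : A) : A :=
  rootPowerSum n (leadingCharPoly ζ 1) + rootPowerSum n (leadingCharPoly ζ (-1))

theorem pairCharSum_one [IsAlgClosed A] :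
    pairCharSum K (1 : A) = 2 ^ finrank (ZMod 2) K -
      rootPowerSum (finrank (ZMod 2) K) (leadingCharPoly 1 (-1)) := by
  have hcard : ∑ a : K, unitChar (1 : A) 1 (conjPoly (ZMod 2) a).reverse =
      2 ^ finrank (ZMod 2) K := by
    simp only [unitChar_one_one]
    rw [Finset.sum_const, Finset.card_univ, nsmul_one, card_eq_pow_finrank (K := ZMod 2),
      ZMod.card, Nat.cast_pow, Nat.cast_ofNat]
  rw [pairCharSum, Finset.sum_add_distrib, hcard,
    sum_unitChar_conjPoly K (one_pow 8) neg_one_sq (by simp), sub_eq_add_neg]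

theorem pairCharSum_of_ne_one [IsAlgClosed A] {ζ : A} (hζ : ζ ^ 8 = 1) (hne : ζ ≠ 1) :
    pairCharSum K ζ = -pairPowerSum (finrank (ZMod 2) K) ζ := by
  have hzero := one_add_mul_one_add_sq_mul_eq_zero hζ hne
  rw [pairCharSum, Finset.sum_add_distrib,
    sum_unitChar_conjPoly K hζ (one_pow 2) (by rw [hzero, mul_zero]),
    sum_unitChar_conjPoly K hζ neg_one_sq (by rw [hzero, mul_zero]), pairPowerSum, neg_add]

theorem sum_primitiveRoots_inv_mul_pairCharSum [IsAlgClosed A] {d : ℕ} (hd : 1 < d)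
    (hdvd : d ∣ 8) :
    ∑ ξ ∈ primitiveRoots d A, ξ⁻¹ * pairCharSum K ξ =
      -∑ ξ ∈ primitiveRoots d A, ξ⁻¹ * pairPowerSum (finrank (ZMod 2) K) ξ := by
  rw [← Finset.sum_neg_distrib]
  refine Finset.sum_congr rfl fun ξ hξ ↦ ?_
  have hprim := isPrimitiveRoot_of_mem_primitiveRoots hξ
  rw [pairCharSum_of_ne_one K ((hprim.pow_eq_one_iff_dvd 8).mpr hdvd) (hprim.ne_one hd), mul_neg]

end Counting

section CountingType

open Module

variable (K : Type) [Field K] [Fintype K] [Algebra (ZMod 2) K] {A : Type*} [Field A]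

theorem sum_inv_mul_pairCharSum {η : A} (hη : IsPrimitiveRoot η 8) :
    ∑ ξ ∈ nthRootsFinset 8 (1 : A), ξ⁻¹ * pairCharSum K ξ =
      16 * (cnt4 (finrank (ZMod 2) K) K 1 0 0 0 : A) := by
  classical
  simp only [pairCharSum, Finset.mul_sum]
  rw [Finset.sum_comm]
  simp only [sum_inv_mul_unitChar hη, coeff_reverse_conjPoly_eq_iff, map_one, map_zero, cnt4,
    Nat.card_eq_fintype_card, Fintype.card_subtype, Finset.sum_ite, Finset.sum_const_zero,
    Finset.sum_const, add_zero, nsmul_eq_mul, mul_comm]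

theorem sixteen_mul_cnt4 [IsAlgClosed A] [NeZero (2 : A)] {n : ℕ}
    (hn : finrank (ZMod 2) K = n) :
    16 * (cnt4 n K 1 0 0 0 : A) = 2 ^ n - rootPowerSum n (leadingCharPoly 1 (-1)) +
      pairPowerSum n (-1) - ∑ ξ ∈ primitiveRoots 4 A, ξ⁻¹ * pairPowerSum n ξ -
      ∑ ξ ∈ primitiveRoots 8 A, ξ⁻¹ * pairPowerSum n ξ := by
  subst hn
  have : NeZero ((8 : ℕ) : A) := ⟨by
    simpa [show (8 : A) = 2 ^ 3 by norm_num] using two_ne_zero (α := A)⟩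
  obtain ⟨η, hη⟩ := HasEnoughRootsOfUnity.exists_primitiveRoot A 8
  have hdivisors : Nat.divisors 8 = {1, 2, 4, 8} := by decide
  rw [← sum_inv_mul_pairCharSum K hη, sum_nthRootsFinset_eq_sum_divisors, hdivisors,
    Finset.sum_insert (by decide), Finset.sum_insert (by decide), Finset.sum_pair (by decide),
    sum_primitiveRoots_inv_mul_pairCharSum K (by decide : 1 < 2) (by decide),
    sum_primitiveRoots_inv_mul_pairCharSum K (by decide : 1 < 4) (by decide),
    sum_primitiveRoots_inv_mul_pairCharSum K (by decide : 1 < 8) (by decide),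
    IsPrimitiveRoot.primitiveRoots_one, Finset.sum_singleton, pairCharSum_one, primitiveRoots_two,
    Finset.sum_singleton, inv_one, inv_neg, inv_one]
  ring

end CountingType

section ExplicitFactors

theorem rootPowerSum_prod {A ι : Type*} [CommRing A] [IsDomain A] (n : ℕ) {f : ι → A[X]}
    {s : Finset ι} (h : ∏ i ∈ s, f i ≠ 0) :
    rootPowerSum n (∏ i ∈ s, f i) = ∑ i ∈ s, rootPowerSum n (f i) := by
  rw [rootPowerSum, roots_prod _ _ h, Multiset.map_bind, Multiset.sum_bind]
  rfl

theorem rootPowerSum_scaleRoots {A : Type*} [CommRing A] [IsDomain A] (n : ℕ) (p : A[X]) {u : A}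
    (hu : IsUnit u) : rootPowerSum n (p.scaleRoots u) = u ^ n * rootPowerSum n p := by
  simp only [rootPowerSum, roots_scaleRoots p hu, Multiset.map_map, Function.comp_def, mul_pow,
    Multiset.sum_map_mul_left]

theorem scaleRoots_toPoly {A : Type*} [CommRing A] [Nontrivial A] (b c d u : A) :
    (Cubic.toPoly ⟨1, b, c, d⟩).scaleRoots u =
      Cubic.toPoly ⟨1, u * b, u ^ 2 * c, u ^ 3 * d⟩ := by
  ext i
  rw [coeff_scaleRoots, Cubic.natDegree_of_a_ne_zero' one_ne_zero]
  match i with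
  | 0 => simp only [Cubic.coeff_eq_d, Nat.sub_zero, mul_comm]
  | 1 => simp only [Cubic.coeff_eq_c, Nat.reduceSub, mul_comm]
  | 2 => simp only [Cubic.coeff_eq_b, Nat.reduceSub, pow_one, mul_comm]
  | 3 => simp only [Cubic.coeff_eq_a, Nat.sub_self, pow_zero, mul_one]
  | i + 4 => simp only [Cubic.coeff_eq_zero (show 3 < i + 4 by lia), zero_mul]

variable (n : ℕ)

theorem rho_mul {γ δ : ℤ[X]} (hγ : γ ≠ 0) (hδ : δ ≠ 0) : rho n (γ * δ) = rho n γ + rho n δ := by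
  have hne : γ.map (Int.castRingHom ℂ) * δ.map (Int.castRingHom ℂ) ≠ 0 := by
    rw [← Polynomial.map_mul]
    exact (Polynomial.map_ne_zero_iff Int.cast_injective).mpr (mul_ne_zero hγ hδ)
  rw [rho, Polynomial.map_mul, roots_mul hne, Multiset.map_add, Multiset.sum_add, rho, rho]

theorem rho_pow (γ : ℤ[X]) (k : ℕ) : rho n (γ ^ k) = k * rho n γ := by
  rw [rho, Polynomial.map_pow, roots_pow, Multiset.map_nsmul, Multiset.sum_nsmul, nsmul_eq_mul, rho]

variable {n}

theorem rho_X (hn : n ≠ 0) : rho n X = 0 := by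
  simp [rho, hn]

theorem rho_comp_neg_X (hn : Odd n) (γ : ℤ[X]) : rho n (γ.comp (-X)) = -rho n γ := by
  simp only [rho, Polynomial.map_comp, Polynomial.map_neg, map_X, roots_comp_neg_X,
    Multiset.map_map, Function.comp_def, hn.neg_pow, Multiset.sum_map_neg]

theorem rho_eq_zero_of_comp_neg_X_eq (hn : Odd n) {γ : ℤ[X]} (hγ : γ.comp (-X) = γ) :
    rho n γ = 0 :=
  self_eq_neg.mp (by rw [← rho_comp_neg_X hn, hγ])

theorem rho_X_sq_add_C (hn : Odd n) (c : ℤ) : rho n (X ^ 2 + C c) = 0 :=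
  rho_eq_zero_of_comp_neg_X_eq hn (by simp)

theorem d21_ne_zero : d21 ≠ 0 := by
  have : d21.Monic := by unfold d21; monicity!
  exact this.ne_zero

theorem d41_ne_zero : d41 ≠ 0 := by
  have : d41.Monic := by unfold d41; monicity!
  exact this.ne_zero

theorem d81_ne_zero : d81 ≠ 0 := by
  have : d81.Monic := by unfold d81; monicity!
  exact this.ne_zero

theorem d82_ne_zero : d82 ≠ 0 := by
  have : d82.Monic := by unfold d82; monicity!
  exact this.ne_zero

section ZetaCombination

variable (P Q R S : ℤ[X])

/-- The polynomial over `ℤ[ζ]` whose coordinates in `1, ζ, ζ ^ 2, ζ ^ 3` are `P, Q, R, S`. -/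
noncomputable def zetaCombination (ζ : ℂ) : ℂ[X] :=
  P.map (Int.castRingHom ℂ) + C ζ * Q.map (Int.castRingHom ℂ) +
    C ζ ^ 2 * R.map (Int.castRingHom ℂ) + C ζ ^ 3 * S.map (Int.castRingHom ℂ)

theorem prod_primitiveRoots_four_zetaCombination :
    ∏ ξ ∈ primitiveRoots 4 ℂ, zetaCombination P Q 0 0 ξ =
      (P ^ 2 + Q ^ 2).map (Int.castRingHom ℂ) := by
  have hη := Complex.isPrimitiveRoot_exp 4 (by simp)
  generalize Complex.exp _ = η at hη
  have hsq : C η ^ 2 = -1 := by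
    rw [← C_pow, sq_eq_neg_one_of_isPrimitiveRoot_four hη, C_neg, C_1]
  rw [prod_primitiveRoots_four hη, zetaCombination, zetaCombination, C_pow]
  simp only [Polynomial.map_add, Polynomial.map_pow, Polynomial.map_zero, mul_zero, add_zero]
  generalize P.map (Int.castRingHom ℂ) = p, Q.map (Int.castRingHom ℂ) = q
  linear_combination (p * q * C η + q ^ 2 * (C η ^ 2 - 1)) * hsq

theorem zetaCombination_mul_zetaCombination_neg {ζ : ℂ} (hζ : ζ ^ 4 = -1) :
    zetaCombination P Q R S ζ * zetaCombination P Q R S (-ζ) =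
      (P ^ 2 - R ^ 2 + 2 * Q * S).map (Int.castRingHom ℂ) +
        C ζ ^ 2 * (2 * P * R - Q ^ 2 + S ^ 2).map (Int.castRingHom ℂ) := by
  have hζ' : C ζ ^ 4 = -1 := by rw [← C_pow, hζ, C_neg, C_1]
  simp only [zetaCombination, Polynomial.map_add, Polynomial.map_sub, Polynomial.map_mul,
    Polynomial.map_pow, Polynomial.map_ofNat, C_neg]
  generalize P.map (Int.castRingHom ℂ) = p, Q.map (Int.castRingHom ℂ) = q,
    R.map (Int.castRingHom ℂ) = r, S.map (Int.castRingHom ℂ) = s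
  linear_combination (r ^ 2 - 2 * q * s - C ζ ^ 2 * s ^ 2) * hζ'

theorem prod_primitiveRoots_eight_zetaCombination :
    ∏ ξ ∈ primitiveRoots 8 ℂ, zetaCombination P Q R S ξ =
      ((P ^ 2 - R ^ 2 + 2 * Q * S) ^ 2 + (2 * P * R - Q ^ 2 + S ^ 2) ^ 2).map
        (Int.castRingHom ℂ) := by
  have hη := Complex.isPrimitiveRoot_exp 8 (by simp)
  generalize Complex.exp _ = η at hη
  have hη4 := pow_four_eq_neg_one_of_isPrimitiveRoot_eight hη
  have hη5 : η ^ 5 = -η := by linear_combination η * hη4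
  have hη7 : η ^ 7 = -η ^ 3 := by linear_combination η ^ 3 * hη4
  have hη34 : (η ^ 3) ^ 4 = -1 := by rw [pow_right_comm, hη4]; norm_num
  have hC : C η ^ 4 = -1 := by rw [← C_pow, hη4, C_neg, C_1]
  rw [prod_primitiveRoots_eight hη, hη5, hη7, zetaCombination_mul_zetaCombination_neg _ _ _ _ hη4,
    zetaCombination_mul_zetaCombination_neg _ _ _ _ hη34, C_pow]
  generalize P ^ 2 - R ^ 2 + 2 * Q * S = a, 2 * P * R - Q ^ 2 + S ^ 2 = b
  rw [Polynomial.map_add, Polynomial.map_pow, Polynomial.map_pow]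
  generalize a.map (Int.castRingHom ℂ) = a, b.map (Int.castRingHom ℂ) = b
  linear_combination (a * b * C η ^ 2 + b ^ 2 * (C η ^ 4 - 1)) * hC

variable {P Q R S} (n : ℕ)

theorem sum_primitiveRoots_four_rootPowerSum (h : P ^ 2 + Q ^ 2 ≠ 0) :
    ∑ ξ ∈ primitiveRoots 4 ℂ, rootPowerSum n (zetaCombination P Q 0 0 ξ) =
      rho n (P ^ 2 + Q ^ 2) := by
  rw [← rootPowerSum_prod, prod_primitiveRoots_four_zetaCombination, rootPowerSum, rho]
  rwa [prod_primitiveRoots_four_zetaCombination, Polynomial.map_ne_zero_iff Int.cast_injective]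

theorem sum_primitiveRoots_eight_rootPowerSum
    (h : (P ^ 2 - R ^ 2 + 2 * Q * S) ^ 2 + (2 * P * R - Q ^ 2 + S ^ 2) ^ 2 ≠ 0) :
    ∑ ξ ∈ primitiveRoots 8 ℂ, rootPowerSum n (zetaCombination P Q R S ξ) =
      rho n ((P ^ 2 - R ^ 2 + 2 * Q * S) ^ 2 + (2 * P * R - Q ^ 2 + S ^ 2) ^ 2) := by
  rw [← rootPowerSum_prod, prod_primitiveRoots_eight_zetaCombination, rootPowerSum, rho]
  rwa [prod_primitiveRoots_eight_zetaCombination, Polynomial.map_ne_zero_iff Int.cast_injective]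

end ZetaCombination

end ExplicitFactors

section Twists

theorem pow_mul_pairPowerSum {A : Type*} [Field A] (n : ℕ) {ζ u b c d c' d' : A}
    (hu : u ≠ 0) (hb : u * (1 + ζ) = b) (hc : u ^ 2 * (1 + ζ + ζ ^ 2 + ζ ^ 7) = c)
    (hd : u ^ 3 * (1 + ζ + ζ ^ 2 + ζ ^ 3 + (1 + ζ ^ 2 + ζ ^ 5 + ζ ^ 7)) = d)
    (hc' : u ^ 2 * (1 + ζ + ζ ^ 2 - ζ ^ 7) = c')
    (hd' : u ^ 3 * (1 + ζ + ζ ^ 2 + ζ ^ 3 - (1 + ζ ^ 2 + ζ ^ 5 + ζ ^ 7)) = d') :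
    u ^ n * pairPowerSum n ζ =
      rootPowerSum n (Cubic.toPoly ⟨1, b, c, d⟩) +
        rootPowerSum n (Cubic.toPoly ⟨1, b, c', d'⟩) := by
  subst hb hc hd hc' hd'
  simp only [pairPowerSum, leadingCharPoly, mul_add (u ^ n),
    ← rootPowerSum_scaleRoots n _ hu.isUnit, scaleRoots_toPoly, one_mul, neg_mul,
    ← sub_eq_add_neg]

section Scaling

variable {ζ : ℂ} (n : ℕ)

theorem neg_pow_mul_pairPowerSum_of_sq (hζ : ζ ^ 2 = -1) :
    (-ζ) ^ n * pairPowerSum n ζ =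
      rootPowerSum n (zetaCombination (X ^ 3 + X ^ 2) (-X ^ 2) 0 0 ζ) +
        rootPowerSum n (zetaCombination (X ^ 3 + X ^ 2) (-X ^ 2 - 2 * X) 0 0 ζ) := by
  rw [pow_mul_pairPowerSum n (b := 1 - ζ) (c := 0) (d := 0) (c' := -2 * ζ) (d' := 0)
    (by grind) (by grind) (by grind) (by grind) (by grind) (by grind)]
  congr 2 <;>
  · simp only [Cubic.toPoly, map_one, map_sub, map_neg, map_mul, C_ofNat, map_zero,
      zetaCombination, Polynomial.map_add, Polynomial.map_pow, map_X, Polynomial.map_sub,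
      Polynomial.map_neg, Polynomial.map_mul, Polynomial.map_ofNat, Polynomial.map_zero]
    ring

theorem neg_cube_pow_mul_pairPowerSum (hζ : ζ ^ 4 = -1) :
    (-ζ ^ 3) ^ n * pairPowerSum n ζ =
      rootPowerSum n (zetaCombination (X ^ 3 + X ^ 2 + X) (-X - 2) (-X) (-X ^ 2 - X - 2) ζ) +
        rootPowerSum n
          (zetaCombination (X ^ 3 + X ^ 2 + X + 2) X (-X - 2) (-X ^ 2 - X) ζ) := by
  rw [pow_mul_pairPowerSum n (b := 1 - ζ ^ 3) (c := 1 - ζ - ζ ^ 2 - ζ ^ 3)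
    (d := -2 * ζ - 2 * ζ ^ 3) (c' := 1 + ζ - ζ ^ 2 - ζ ^ 3) (d' := 2 - 2 * ζ ^ 2)
    (by grind) (by grind) (by grind) (by grind) (by grind) (by grind)]
  congr 2 <;>
  · simp only [Cubic.toPoly, map_one, map_sub, map_pow, map_add, map_neg, map_mul, C_ofNat,
      zetaCombination, Polynomial.map_add, Polynomial.map_pow, map_X, Polynomial.map_sub,
      Polynomial.map_neg, Polynomial.map_ofNat]
    ring

theorem neg_pow_mul_pairPowerSum (hζ : ζ ^ 4 = -1) :
    (-ζ) ^ n * pairPowerSum n ζ =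
      rootPowerSum n (zetaCombination (X ^ 3 - X) (-X ^ 2 + X + 2) (-X ^ 2 + X) (X - 2) ζ) +
        rootPowerSum n
          (zetaCombination (X ^ 3 - X + 2) (-X ^ 2 - X) (-X ^ 2 + X + 2) X ζ) := by
  rw [pow_mul_pairPowerSum n (b := -ζ - ζ ^ 2) (c := -1 + ζ + ζ ^ 2 + ζ ^ 3)
    (d := 2 * ζ - 2 * ζ ^ 3) (c' := -1 - ζ + ζ ^ 2 + ζ ^ 3) (d' := 2 + 2 * ζ ^ 2)
    (by grind) (by grind) (by grind) (by grind) (by grind) (by grind)]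
  congr 2 <;>
  · simp only [Cubic.toPoly, map_one, map_sub, map_neg, map_pow, map_add, map_mul, C_ofNat,
      zetaCombination, Polynomial.map_add, Polynomial.map_sub, Polynomial.map_pow, map_X,
      Polynomial.map_ofNat, Polynomial.map_neg]
    ring

end Scaling

variable {n : ℕ}

theorem sum_primitiveRoots_four_neg_pow_mul_pairPowerSum (hn : n ≠ 0) :
    ∑ ξ ∈ primitiveRoots 4 ℂ, (-ξ) ^ n * pairPowerSum n ξ = rho n d21 + rho n d41 := by
  have hpos : ((X ^ 3 + X ^ 2) ^ 2 + (-X ^ 2) ^ 2 : ℤ[X]) = X ^ 4 * d21 := by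
    rw [d21]; ring
  have hneg : ((X ^ 3 + X ^ 2) ^ 2 + (-X ^ 2 - 2 * X) ^ 2 : ℤ[X]) = X ^ 2 * d41 := by
    rw [d41]; ring
  have hX (k : ℕ) : (X ^ k : ℤ[X]) ≠ 0 := pow_ne_zero k X_ne_zero
  have hpos_ne := mul_ne_zero (hX 4) d21_ne_zero
  have hneg_ne := mul_ne_zero (hX 2) d41_ne_zero
  rw [Finset.sum_congr rfl fun ξ hξ ↦ neg_pow_mul_pairPowerSum_of_sq n
      (sq_eq_neg_one_of_isPrimitiveRoot_four (isPrimitiveRoot_of_mem_primitiveRoots hξ)),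
    Finset.sum_add_distrib, sum_primitiveRoots_four_rootPowerSum n (hpos ▸ hpos_ne),
    sum_primitiveRoots_four_rootPowerSum n (hneg ▸ hneg_ne), hpos, hneg,
    rho_mul n (hX 4) d21_ne_zero, rho_mul n (hX 2) d41_ne_zero, rho_pow, rho_pow, rho_X hn]
  ring

theorem sum_primitiveRoots_eight_neg_cube_pow_mul_pairPowerSum (hn : Odd n) :
    ∑ ξ ∈ primitiveRoots 8 ℂ, (-ξ ^ 3) ^ n * pairPowerSum n ξ =
      2 * rho n d21 + rho n d81 + rho n d82 := by
  have hpos : (((X ^ 3 + X ^ 2 + X) ^ 2 - (-X) ^ 2 + 2 * (-X - 2) * (-X ^ 2 - X - 2)) ^ 2 +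
      (2 * (X ^ 3 + X ^ 2 + X) * (-X) - (-X - 2) ^ 2 + (-X ^ 2 - X - 2) ^ 2) ^ 2 : ℤ[X]) =
        d21 ^ 2 * d82 := by
    rw [d21, d82]; ring
  have hneg : (((X ^ 3 + X ^ 2 + X + 2) ^ 2 - (-X - 2) ^ 2 + 2 * X * (-X ^ 2 - X)) ^ 2 +
      (2 * (X ^ 3 + X ^ 2 + X + 2) * (-X - 2) - X ^ 2 + (-X ^ 2 - X) ^ 2) ^ 2 : ℤ[X]) =
        (X ^ 2 + C 2) ^ 2 * d81 := by
    rw [d81, C_ofNat]; ring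
  have hd21 := pow_ne_zero 2 d21_ne_zero
  have hX := pow_ne_zero 2 (X_pow_add_C_ne_zero two_pos (2 : ℤ))
  have hpos_ne := mul_ne_zero hd21 d82_ne_zero
  have hneg_ne := mul_ne_zero hX d81_ne_zero
  rw [Finset.sum_congr rfl fun ξ hξ ↦ neg_cube_pow_mul_pairPowerSum n
      (pow_four_eq_neg_one_of_isPrimitiveRoot_eight (isPrimitiveRoot_of_mem_primitiveRoots hξ)),
    Finset.sum_add_distrib, sum_primitiveRoots_eight_rootPowerSum n (hpos ▸ hpos_ne),
    sum_primitiveRoots_eight_rootPowerSum n (hneg ▸ hneg_ne), hpos, hneg,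
    rho_mul n hd21 d82_ne_zero, rho_mul n hX d81_ne_zero, rho_pow, rho_pow, rho_X_sq_add_C hn]
  push_cast
  ring

theorem sum_primitiveRoots_eight_neg_pow_mul_pairPowerSum (hn : Odd n) :
    ∑ ξ ∈ primitiveRoots 8 ℂ, (-ξ) ^ n * pairPowerSum n ξ =
      2 * rho n d21 - rho n d81 + rho n d82 := by
  have hpos : (((X ^ 3 - X) ^ 2 - (-X ^ 2 + X) ^ 2 + 2 * (-X ^ 2 + X + 2) * (X - 2)) ^ 2 +
      (2 * (X ^ 3 - X) * (-X ^ 2 + X) - (-X ^ 2 + X + 2) ^ 2 + (X - 2) ^ 2) ^ 2 : ℤ[X]) =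
        d21 ^ 2 * d81.comp (-X) := by
    simp only [d21, d81, add_comp, mul_comp, pow_comp, X_comp, ofNat_comp]; ring
  have hneg : (((X ^ 3 - X + 2) ^ 2 - (-X ^ 2 + X + 2) ^ 2 + 2 * (-X ^ 2 - X) * X) ^ 2 +
      (2 * (X ^ 3 - X + 2) * (-X ^ 2 + X + 2) - (-X ^ 2 - X) ^ 2 + X ^ 2) ^ 2 : ℤ[X]) =
        (X ^ 2 + C (-2)) ^ 2 * d82 := by
    rw [d82, C_neg, C_ofNat]; ring
  have hd21 := pow_ne_zero 2 d21_ne_zero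
  have hd81 : d81.comp (-X) ≠ 0 := comp_neg_X_eq_zero_iff.not.mpr d81_ne_zero
  have hX := pow_ne_zero 2 (X_pow_add_C_ne_zero two_pos (-2 : ℤ))
  have hpos_ne := mul_ne_zero hd21 hd81
  have hneg_ne := mul_ne_zero hX d82_ne_zero
  rw [Finset.sum_congr rfl fun ξ hξ ↦ neg_pow_mul_pairPowerSum n
      (pow_four_eq_neg_one_of_isPrimitiveRoot_eight (isPrimitiveRoot_of_mem_primitiveRoots hξ)),
    Finset.sum_add_distrib, sum_primitiveRoots_eight_rootPowerSum n (hpos ▸ hpos_ne),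
    sum_primitiveRoots_eight_rootPowerSum n (hneg ▸ hneg_ne), hpos, hneg,
    rho_mul n hd21 hd81, rho_mul n hX d82_ne_zero, rho_pow, rho_pow, rho_X_sq_add_C hn,
    rho_comp_neg_X hn]
  push_cast
  ring

theorem rootPowerSum_leadingCharPoly_one_neg_one (hn : n ≠ 0) :
    rootPowerSum n (leadingCharPoly 1 (-1)) = rho n d21 := by
  have hmap : leadingCharPoly 1 (-1) = (X * d21).map (Int.castRingHom ℂ) := by
    simp only [leadingCharPoly, Cubic.toPoly, map_one, map_add, map_mul, map_neg, map_pow, d21,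
      Polynomial.map_mul, map_X, Polynomial.map_add, Polynomial.map_pow, Polynomial.map_ofNat]
    ring
  rw [hmap, rootPowerSum, ← rho, rho_mul n X_ne_zero d21_ne_zero, rho_X hn, zero_add]

theorem pairPowerSum_neg_one (hn : Odd n) : pairPowerSum n (-1 : ℂ) = 0 := by
  have hpos : leadingCharPoly (-1) 1 = (X ^ 3 : ℤ[X]).map (Int.castRingHom ℂ) := by
    simp only [leadingCharPoly, Cubic.toPoly, map_one, map_add, map_mul, map_neg, map_pow,
      Polynomial.map_pow, map_X]
    ring
  have hneg : leadingCharPoly (-1) (-1) = (X * (X ^ 2 + C 2) : ℤ[X]).map (Int.castRingHom ℂ) := by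
    simp only [leadingCharPoly, Cubic.toPoly, map_one, map_add, map_mul, map_neg, map_pow, C_ofNat,
      Polynomial.map_mul, map_X, Polynomial.map_add, Polynomial.map_pow, Polynomial.map_ofNat]
    ring
  rw [pairPowerSum, hpos, hneg, rootPowerSum, rootPowerSum, ← rho, ← rho, rho_pow,
    rho_mul n X_ne_zero (X_pow_add_C_ne_zero two_pos 2), rho_X hn.pos.ne', rho_X_sq_add_C hn]
  ring

end Twists

section Residues

open Module

theorem finrank_zmod_eq_of_card_eq_pow {p n : ℕ} [Fact p.Prime] {V : Type*} [AddCommGroup V]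
    [Fintype V] [Module (ZMod p) V] (hV : Fintype.card V = p ^ n) : finrank (ZMod p) V = n :=
  Nat.pow_right_injective (Fact.out : p.Prime).two_le <| by
    simpa only [ZMod.card, hV] using (card_eq_pow_finrank (K := ZMod p) (V := V)).symm

variable (K : Type) [Field K] [Fintype K] [Algebra (ZMod 2) K] {n m : ℕ}

theorem sixteen_mul_cnt4_of_eq_four_mul_add_one (hn : finrank (ZMod 2) K = n)
    (hm : n = 4 * m + 1) :
    16 * (cnt4 n K 1 0 0 0 : ℂ) = 2 ^ n - (2 * rho n d21 + rho n d41 +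
      (-1) ^ m * (2 * rho n d21 + rho n d81 + rho n d82)) := by
  have hodd : Odd n := ⟨2 * m, by lia⟩
  have hfour : ∑ ξ ∈ primitiveRoots 4 ℂ, ξ⁻¹ * pairPowerSum n ξ = rho n d21 + rho n d41 := by
    rw [← sum_primitiveRoots_four_neg_pow_mul_pairPowerSum hodd.pos.ne']
    refine Finset.sum_congr rfl fun ξ hξ ↦ ?_
    have hsq := sq_eq_neg_one_of_isPrimitiveRoot_four (isPrimitiveRoot_of_mem_primitiveRoots hξ)
    have hinv : ξ⁻¹ = -ξ := inv_eq_of_mul_eq_one_right (by linear_combination -hsq)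
    have hpow : (-ξ) ^ 4 = 1 := by linear_combination (ξ ^ 2 - 1) * hsq
    rw [hinv, hm, pow_succ _ (4 * m), pow_mul, hpow, one_pow, one_mul]
  have height : ∑ ξ ∈ primitiveRoots 8 ℂ, ξ⁻¹ * pairPowerSum n ξ =
      (-1) ^ m * (2 * rho n d21 + rho n d81 + rho n d82) := by
    rw [← sum_primitiveRoots_eight_neg_cube_pow_mul_pairPowerSum hodd, Finset.mul_sum]
    refine Finset.sum_congr rfl fun ξ hξ ↦ ?_
    have h4 :=
      pow_four_eq_neg_one_of_isPrimitiveRoot_eight (isPrimitiveRoot_of_mem_primitiveRoots hξ)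
    have hinv : ξ⁻¹ = -ξ ^ 3 := inv_eq_of_mul_eq_one_right (by linear_combination -h4)
    have hpow : (-ξ ^ 3) ^ 4 = -1 := by linear_combination (ξ ^ 8 - ξ ^ 4 + 1) * h4
    rw [hinv, hm, pow_succ _ (4 * m), pow_mul, hpow, ← mul_assoc, ← mul_assoc, ← mul_pow,
      neg_one_mul, neg_neg, one_pow, one_mul]
  rw [sixteen_mul_cnt4 K hn, rootPowerSum_leadingCharPoly_one_neg_one hodd.pos.ne',
    pairPowerSum_neg_one hodd, hfour, height]
  ring

theorem sixteen_mul_cnt4_of_eq_four_mul_add_three (hn : finrank (ZMod 2) K = n)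
    (hm : n = 4 * m + 3) :
    16 * (cnt4 n K 1 0 0 0 : ℂ) = 2 ^ n - (-rho n d41 +
      (-1) ^ m * (2 * rho n d21 - rho n d81 + rho n d82)) := by
  have hodd : Odd n := ⟨2 * m + 1, by lia⟩
  have hfour : ∑ ξ ∈ primitiveRoots 4 ℂ, ξ⁻¹ * pairPowerSum n ξ =
      -(rho n d21 + rho n d41) := by
    rw [← sum_primitiveRoots_four_neg_pow_mul_pairPowerSum hodd.pos.ne', ← Finset.sum_neg_distrib]
    refine Finset.sum_congr rfl fun ξ hξ ↦ ?_
    have hsq := sq_eq_neg_one_of_isPrimitiveRoot_four (isPrimitiveRoot_of_mem_primitiveRoots hξ)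
    have hinv : ξ⁻¹ = -(-ξ) ^ 3 :=
      inv_eq_of_mul_eq_one_right (by linear_combination (ξ ^ 2 - 1) * hsq)
    have hpow : (-ξ) ^ 4 = 1 := by linear_combination (ξ ^ 2 - 1) * hsq
    rw [hinv, hm, pow_add _ (4 * m), pow_mul, hpow, one_pow, one_mul, neg_mul]
  have height : ∑ ξ ∈ primitiveRoots 8 ℂ, ξ⁻¹ * pairPowerSum n ξ =
      (-1) ^ m * (2 * rho n d21 - rho n d81 + rho n d82) := by
    rw [← sum_primitiveRoots_eight_neg_pow_mul_pairPowerSum hodd, Finset.mul_sum]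
    refine Finset.sum_congr rfl fun ξ hξ ↦ ?_
    have h4 :=
      pow_four_eq_neg_one_of_isPrimitiveRoot_eight (isPrimitiveRoot_of_mem_primitiveRoots hξ)
    have hinv : ξ⁻¹ = (-ξ) ^ 3 := inv_eq_of_mul_eq_one_right (by linear_combination -h4)
    have hpow : (-ξ) ^ 4 = -1 := by linear_combination h4
    rw [hinv, hm, pow_add _ (4 * m), pow_mul, hpow, ← mul_assoc, ← mul_assoc, ← mul_pow,
      neg_one_mul, neg_neg, one_pow, one_mul]
  rw [sixteen_mul_cnt4 K hn, rootPowerSum_leadingCharPoly_one_neg_one hodd.pos.ne',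
    pairPowerSum_neg_one hodd, hfour, height]
  ring

end Residues

theorem statement12 (n : ℕ) (hn : 4 ≤ n) (hodd : Odd n)
    (K : Type) [Field K] [Fintype K] (hK : Fintype.card K = 2 ^ n) :
    (n % 8 = 1 →
      (cnt4 n K 1 0 0 0 : ℂ)
        = 2 ^ (n - 4) - (1 / 16) * (4 * rho n d21 + rho n d41 + rho n d81 + rho n d82)) ∧
    (n % 8 = 3 →
      (cnt4 n K 1 0 0 0 : ℂ)
        = 2 ^ (n - 4) - (1 / 16) * (2 * rho n d21 - rho n d41 - rho n d81 + rho n d82)) ∧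
    (n % 8 = 5 →
      (cnt4 n K 1 0 0 0 : ℂ)
        = 2 ^ (n - 4) - (1 / 16) * (rho n d41 - rho n d81 - rho n d82)) ∧
    (n % 8 = 7 →
      (cnt4 n K 1 0 0 0 : ℂ)
        = 2 ^ (n - 4) - (1 / 16) * (-2 * rho n d21 - rho n d41 + rho n d81 - rho n d82)) := by
  have : CharP K 2 := charP_of_card_eq_prime_pow hK
  let : Algebra (ZMod 2) K := ZMod.algebra K 2
  have hfinrank := finrank_zmod_eq_of_card_eq_pow hK
  have hpow : (2 : ℂ) ^ n = 16 * 2 ^ (n - 4) := by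
    rw [← pow_mul_pow_sub 2 hn]
    norm_num
  have hcount_one (h : n % 4 = 1) :=
    sixteen_mul_cnt4_of_eq_four_mul_add_one K hfinrank (m := n / 4) (by lia)
  have hcount_three (h : n % 4 = 3) :=
    sixteen_mul_cnt4_of_eq_four_mul_add_three K hfinrank (m := n / 4) (by lia)
  have hsign_even (h : n / 4 % 2 = 0) : (-1 : ℂ) ^ (n / 4) = 1 := (Nat.even_iff.mpr h).neg_one_pow
  have hsign_odd (h : n / 4 % 2 = 1) : (-1 : ℂ) ^ (n / 4) = -1 := (Nat.odd_iff.mpr h).neg_one_pow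
  refine ⟨fun h ↦ ?_, fun h ↦ ?_, fun h ↦ ?_, fun h ↦ ?_⟩
  · have hcount := hcount_one (by lia)
    rw [hsign_even (by lia), hpow] at hcount
    linear_combination hcount / 16
  · have hcount := hcount_three (by lia)
    rw [hsign_even (by lia), hpow] at hcount
    linear_combination hcount / 16
  · have hcount := hcount_one (by lia)
    rw [hsign_odd (by lia), hpow] at hcount
    linear_combination hcount / 16
  · have hcount := hcount_three (by lia)
    rw [hsign_odd (by lia), hpow] at hcount
    linear_combination hcount / 16
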